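/- Let n ≥ 1, let D ⊆ ℝ^{2n} be open, let J be a C^∞ almost complex structure on D, and let u : D → ℝ be C². Then the following are equivalent: (i) for every open set Ω ⊆ ℂ and every C² J-holomorphic map f : Ω → D, the function u ∘ f satisfies Δ(u∘f) ≥ 0 on Ω (where Δ is the Euclidean Laplacian on ℝ² ≅ ℂ), i.e. u ∘ f is subharmonic; (ii) ℒ(u)_z(v) ≥ 0 for every z ∈ D and every v ∈ ℝ^{2n}. (A C² function is J-plurisubharmonic if and only if its Levi form is everywhere positive semidefinite.) -/

import Mathlib

open Filter Topology

/-- The 2-form `ddᶜu` associated with an almost complex structure `J`. -/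
noncomputable def acDDc {E : Type*} [NormedAddCommGroup E] [NormedSpace ℝ E]
    (J : E → (E →L[ℝ] E)) (u : E → ℝ) (z v w : E) : ℝ :=
  - fderiv ℝ (fun z' => fderiv ℝ u z' (J z' w)) z v
    + fderiv ℝ (fun z' => fderiv ℝ u z' (J z' v)) z w

/-- The Levi form `ℒ(u)_z(v) := ddᶜu_z(v, J(z)v)`. -/
noncomputable def acLevi {E : Type*} [NormedAddCommGroup E] [NormedSpace ℝ E]
    (J : E → (E →L[ℝ] E)) (u : E → ℝ) (z v : E) : ℝ :=
  acDDc J u z v (J z v)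

/-- `f : Ω → E` is `J`-holomorphic on `Ω` if `df_ζ(iξ) = J(f(ζ))(df_ζ(ξ))`. -/
def IsJHolo {E : Type*} [NormedAddCommGroup E] [NormedSpace ℝ E]
    (J : E → (E →L[ℝ] E)) (Ω : Set ℂ) (f : ℂ → E) : Prop :=
  ∀ ζ ∈ Ω, ∀ ξ : ℂ, fderiv ℝ f ζ (Complex.I * ξ) = J (f ζ) (fderiv ℝ f ζ ξ)

/-- Euclidean Laplacian of a function on ℂ ≅ ℝ². -/
noncomputable def lap (g : ℂ → ℝ) (ζ : ℂ) : ℝ :=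
  fderiv ℝ (fun w => fderiv ℝ g w 1) ζ 1
    + fderiv ℝ (fun w => fderiv ℝ g w Complex.I) ζ Complex.I

/-!
By the chain rule, `Δ(u ∘ f)(ζ) = ℒ(u)_{f(ζ)}(∂ₓf(ζ))` for every `J`-holomorphic `f`; this settles
one implication. For the other, `ℒ(u)_z(v)` is continuous in `(z, v)` and homogeneous of degree two
in `v`, so it is enough to find, near every `(z, v)`, a `J`-holomorphic disc through a point close
to `z` with a derivative at the origin close to a multiple of `v`.

In coordinates with `z = 0` and `J(0) = i`, a map `t f` is `J`-holomorphic if and only if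
`∂ₓf + i ∂ᵧf = M(t f) ∂ᵧf`, where `M = i - J` vanishes at `0` and may be cut off to have compact
support. Since only the germ of `f` at `0` matters, this equation is solved with `ℤ²`-periodic
right-hand sides: `∂ₓ + i ∂ᵧ` is inverted by a Fourier multiplier, and the missing constant term is
supplied by a periodic function that agrees with `Re ζ` near `0`. For small `t` the resulting map is
a contraction in `ℓ²` of a closed ball of the weighted `ℓ¹` space of twice differentiable series;
its fixed point gives a disc `f` with `∂ₓf(0) = v + O(t)`, and `t f(0) = O(t)`.
-/

section PeriodicFunctions

open MeasureTheory UnitAddTorus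

attribute [local instance] instMeasureSpaceUnitAddCircle

local instance : Measure.IsAddHaarMeasure (volume : Measure UnitAddCircle) :=
  inferInstanceAs (Measure.IsAddHaarMeasure AddCircle.haarAddCircle)

local instance : IsProbabilityMeasure (volume : Measure UnitAddCircle) :=
  inferInstanceAs (IsProbabilityMeasure AddCircle.haarAddCircle)

/-- The universal covering `ℂ → ℝ²/ℤ²`. -/
def torusProj (ζ : ℂ) : UnitAddTorus (Fin 2) := ![(ζ.re : UnitAddCircle), (ζ.im : UnitAddCircle)]

theorem isOpenQuotientMap_torusProj : IsOpenQuotientMap torusProj := by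
  have hmk : IsOpenQuotientMap (fun x : ℝ => (x : UnitAddCircle)) :=
    QuotientAddGroup.isOpenQuotientMap_mk
  have hcomp := (IsOpenQuotientMap.piMap fun _ : Fin 2 => hmk).comp
    Complex.basisOneI.equivFunL.toHomeomorph.isOpenQuotientMap
  convert hcomp using 1
  ext ζ i
  fin_cases i <;> simp [torusProj]

theorem torusProj_add (ζ w : ℂ) : torusProj (ζ + w) = torusProj ζ + torusProj w := by
  ext i
  fin_cases i <;> simp [torusProj]

/-- Functions on `ℂ` that are periodic with respect to the lattice `ℤ[i]`, encoded as those that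
factor through the torus `ℝ²/ℤ²`. -/
def DoublyPeriodic {X : Type*} (F : ℂ → X) : Prop := Function.FactorsThrough F torusProj

/-- The function on the torus induced by a doubly periodic function (a junk value if `F` is not
doubly periodic). -/
noncomputable def torusLift {V : Type*} [Zero V] (F : ℂ → V) : UnitAddTorus (Fin 2) → V :=
  Function.extend torusProj F 0

namespace DoublyPeriodic

section

variable {X Y : Type*} {F : ℂ → X}

theorem const (x : X) : DoublyPeriodic fun _ => x := fun _ _ _ => rfl

theorem comp (hF : DoublyPeriodic F) (φ : X → Y) : DoublyPeriodic fun ζ => φ (F ζ) :=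
  fun _ _ h => congrArg φ (hF h)

theorem map₂ {Z : Type*} {G : ℂ → Y} (hF : DoublyPeriodic F) (hG : DoublyPeriodic G)
    (φ : X → Y → Z) : DoublyPeriodic fun ζ => φ (F ζ) (G ζ) :=
  fun _ _ h => congrArg₂ φ (hF h) (hG h)

theorem comp_add_right (hF : DoublyPeriodic F) (w : ℂ) : DoublyPeriodic fun ζ => F (ζ + w) :=
  fun _ _ h => hF (by rw [torusProj_add, torusProj_add, h])

end

section

variable {V : Type*} [Zero V] {F : ℂ → V}

theorem torusLift_torusProj (hF : DoublyPeriodic F) (ζ : ℂ) : torusLift F (torusProj ζ) = F ζ :=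
  Function.FactorsThrough.extend_apply hF 0 ζ

theorem continuous_torusLift [TopologicalSpace V] (hF : DoublyPeriodic F) (hc : Continuous F) :
    Continuous (torusLift F) :=
  isOpenQuotientMap_torusProj.isQuotientMap.continuous_iff.2
    (hc.congr fun ζ => (hF.torusLift_torusProj ζ).symm)

end

section

variable {V : Type*} [NormedAddCommGroup V] {F : ℂ → V}

theorem exists_norm_le (hF : DoublyPeriodic F) (hc : Continuous F) : ∃ K, ∀ ζ, ‖F ζ‖ ≤ K := by
  obtain ⟨K, hK⟩ := isCompact_univ.exists_bound_of_continuousOn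
    (hF.continuous_torusLift hc).continuousOn
  exact ⟨K, fun ζ => hF.torusLift_torusProj ζ ▸ hK _ trivial⟩

theorem integrable_torusLift (hF : DoublyPeriodic F) (hc : Continuous F) :
    Integrable (torusLift F) :=
  (hF.continuous_torusLift hc).integrable_of_hasCompactSupport (HasCompactSupport.of_compactSpace _)

theorem norm_torusLift_le {K : ℝ} (hF : DoublyPeriodic F) (hK : ∀ ζ, ‖F ζ‖ ≤ K)
    (t : UnitAddTorus (Fin 2)) : ‖torusLift F t‖ ≤ K := by
  obtain ⟨ζ, rfl⟩ := isOpenQuotientMap_torusProj.surjective t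
  exact hF.torusLift_torusProj ζ ▸ hK ζ

end

theorem fderiv {V : Type*} [NormedAddCommGroup V] [NormedSpace ℝ V] {F : ℂ → V}
    (hF : DoublyPeriodic F) : DoublyPeriodic (fderiv ℝ F) := by
  intro ζ w h
  have hshift : F = fun z => F (z + (w - ζ)) := funext fun z => hF <| by
    rw [torusProj_add, sub_eq_add_neg, torusProj_add, ← h, ← torusProj_add ζ]
    simp [torusProj]
  conv_lhs => rw [hshift, fderiv_comp_add_right, add_sub_cancel]

theorem iteratedFDeriv {V : Type*} [NormedAddCommGroup V] [NormedSpace ℝ V] {F : ℂ → V}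
    (hF : DoublyPeriodic F) (n : ℕ) : DoublyPeriodic (iteratedFDeriv ℝ n F) := by
  induction n with
  | zero =>
    rw [iteratedFDeriv_zero_eq_comp]
    exact hF.comp _
  | succ n ih =>
    rw [iteratedFDeriv_succ_eq_comp_left]
    exact ih.fderiv.comp _

end DoublyPeriodic

/-- The frequency lattice, i.e. the character group of `ℝ²/ℤ²`. -/
abbrev Freq : Type := Fin 2 → ℤ

/-- The character of `ℂ` with frequency `k`. -/
noncomputable def latticeChar (k : Freq) (ζ : ℂ) : ℂ := mFourier k (torusProj ζ)

/-- The linear functional on `ℝ² = ℂ` with integral coefficients `k`. -/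
noncomputable def freqCLM (k : Freq) : ℂ →L[ℝ] ℝ :=
  (k 0 : ℝ) • Complex.reCLM + (k 1 : ℝ) • Complex.imCLM

theorem freqCLM_apply (k : Freq) (w : ℂ) : freqCLM k w = k 0 * w.re + k 1 * w.im := by
  simp [freqCLM]

theorem latticeChar_eq_exp (k : Freq) (ζ : ℂ) :
    latticeChar k ζ = Complex.exp (2 * Real.pi * Complex.I * freqCLM k ζ) := by
  simp only [latticeChar, mFourier, torusProj, ContinuousMap.coe_mk, Fin.prod_univ_two,
    Matrix.cons_val_zero, Matrix.cons_val_one, fourier_coe_apply, ← Complex.exp_add,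
    freqCLM_apply]
  push_cast
  ring_nf

theorem norm_latticeChar (k : Freq) (ζ : ℂ) : ‖latticeChar k ζ‖ = 1 := by
  rw [latticeChar_eq_exp, show 2 * Real.pi * Complex.I * freqCLM k ζ
    = ((2 * Real.pi * freqCLM k ζ : ℝ) : ℂ) * Complex.I by push_cast; ring,
    Complex.norm_exp_ofReal_mul_I]

theorem latticeChar_add (k l : Freq) (ζ : ℂ) :
    latticeChar (k + l) ζ = latticeChar k ζ * latticeChar l ζ := mFourier_add

theorem latticeChar_neg (k : Freq) (ζ : ℂ) :
    latticeChar (-k) ζ = starRingEnd ℂ (latticeChar k ζ) := mFourier_neg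

theorem latticeChar_zero (ζ : ℂ) : latticeChar 0 ζ = 1 := by simp [latticeChar_eq_exp, freqCLM]

theorem latticeChar_add_right (k : Freq) (ζ w : ℂ) :
    latticeChar k (ζ + w) = latticeChar k ζ * latticeChar k w := by
  rw [latticeChar_eq_exp, latticeChar_eq_exp, latticeChar_eq_exp, map_add, ← Complex.exp_add]
  push_cast
  ring_nf

theorem doublyPeriodic_latticeChar (k : Freq) : DoublyPeriodic (latticeChar k) :=
  fun _ _ h => congrArg (mFourier k) h

theorem contDiff_latticeChar (k : Freq) {n : WithTop ℕ∞} : ContDiff ℝ n (latticeChar k) := by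
  rw [funext (latticeChar_eq_exp k)]
  exact ((contDiff_const.mul
    (Complex.ofRealCLM.contDiff.comp (freqCLM k).contDiff)).cexp)

/-- The `k`-th Fourier coefficient of a doubly periodic function. -/
noncomputable def latticeCoeff {V : Type*} [NormedAddCommGroup V] [NormedSpace ℂ V]
    (F : ℂ → V) (k : Freq) : V := mFourierCoeff (torusLift F) k

section Coefficients

variable {V W : Type*} [NormedAddCommGroup V] [NormedSpace ℂ V] [NormedAddCommGroup W]
  [NormedSpace ℂ W] {F G : ℂ → V}

theorem latticeCoeff_eq_integral (hF : DoublyPeriodic F) (k : Freq) :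
    latticeCoeff F k = ∫ t, torusLift (fun ζ => latticeChar (-k) ζ • F ζ) t := by
  refine integral_congr_ae (.of_forall fun t => ?_)
  obtain ⟨ζ, rfl⟩ := isOpenQuotientMap_torusProj.surjective t
  rw [((doublyPeriodic_latticeChar (-k)).map₂ hF (· • ·)).torusLift_torusProj]
  simp only [hF.torusLift_torusProj, latticeChar]

theorem continuous_latticeChar_smul (hc : Continuous F) (k : Freq) :
    Continuous fun ζ => latticeChar k ζ • F ζ :=
  (contDiff_latticeChar k (n := 0)).continuous.smul hc

theorem integrable_latticeChar_smul (hF : DoublyPeriodic F) (hc : Continuous F) (k : Freq) :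
    Integrable (torusLift fun ζ => latticeChar k ζ • F ζ) :=
  ((doublyPeriodic_latticeChar k).map₂ hF (· • ·)).integrable_torusLift
    (continuous_latticeChar_smul hc k)

theorem norm_latticeCoeff_le {K : ℝ} (hF : DoublyPeriodic F) (hK : ∀ ζ, ‖F ζ‖ ≤ K) (k : Freq) :
    ‖latticeCoeff F k‖ ≤ K := by
  rw [latticeCoeff_eq_integral hF]
  refine (norm_integral_le_of_norm_le_const (.of_forall fun t => ?_)).trans_eq
    (by rw [probReal_univ, mul_one])
  exact ((doublyPeriodic_latticeChar (-k)).map₂ hF (· • ·)).norm_torusLift_le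
    (fun ζ => by simpa only [norm_smul, norm_latticeChar, one_mul] using hK ζ) t

theorem latticeCoeff_clm_comp [CompleteSpace V] [CompleteSpace W] (hF : DoublyPeriodic F)
    (hc : Continuous F) (L : V →L[ℂ] W) (k : Freq) :
    latticeCoeff (fun ζ => L (F ζ)) k = L (latticeCoeff F k) := by
  rw [latticeCoeff_eq_integral hF, latticeCoeff_eq_integral (hF.comp L),
    ← L.integral_comp_comm (integrable_latticeChar_smul hF hc _)]
  refine integral_congr_ae (.of_forall fun t => ?_)
  obtain ⟨ζ, rfl⟩ := isOpenQuotientMap_torusProj.surjective t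
  have hχ := doublyPeriodic_latticeChar (-k)
  simp only [(hχ.map₂ (hF.comp L) (· • ·)).torusLift_torusProj,
    (hχ.map₂ hF (· • ·)).torusLift_torusProj, map_smul]

theorem latticeCoeff_add (hF : DoublyPeriodic F) (hG : DoublyPeriodic G) (hFc : Continuous F)
    (hGc : Continuous G) (k : Freq) :
    latticeCoeff (fun ζ => F ζ + G ζ) k = latticeCoeff F k + latticeCoeff G k := by
  rw [latticeCoeff_eq_integral hF, latticeCoeff_eq_integral hG,
    latticeCoeff_eq_integral (hF.map₂ hG (· + ·)),
    ← integral_add (integrable_latticeChar_smul hF hFc _) (integrable_latticeChar_smul hG hGc _)]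
  refine integral_congr_ae (.of_forall fun t => ?_)
  obtain ⟨ζ, rfl⟩ := isOpenQuotientMap_torusProj.surjective t
  have hχ := doublyPeriodic_latticeChar (-k)
  simp only [(hχ.map₂ (hF.map₂ hG (· + ·)) (· • ·)).torusLift_torusProj,
    (hχ.map₂ hF (· • ·)).torusLift_torusProj, (hχ.map₂ hG (· • ·)).torusLift_torusProj]
  exact smul_add _ _ _

theorem latticeCoeff_sub [CompleteSpace V] (hF : DoublyPeriodic F) (hG : DoublyPeriodic G)
    (hFc : Continuous F) (hGc : Continuous G) (k : Freq) :
    latticeCoeff (fun ζ => F ζ - G ζ) k = latticeCoeff F k - latticeCoeff G k := by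
  have hneg := latticeCoeff_clm_comp hG hGc (-.id ℂ V) k
  simp only [neg_apply, ContinuousLinearMap.id_apply] at hneg
  simp only [sub_eq_add_neg, latticeCoeff_add hF (hG.comp Neg.neg) hFc hGc.neg, hneg]

theorem latticeCoeff_comp_add_right (hF : DoublyPeriodic F) (w : ℂ) (k : Freq) :
    latticeCoeff (fun ζ => F (ζ + w)) k = latticeChar k w • latticeCoeff F k := by
  have hχ := doublyPeriodic_latticeChar (-k)
  rw [latticeCoeff_eq_integral hF, latticeCoeff_eq_integral (hF.comp_add_right w),
    ← integral_smul, ← integral_add_right_eq_self (fun t => latticeChar k w • torusLift _ t)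
      (torusProj w)]
  refine integral_congr_ae (.of_forall fun t => ?_)
  obtain ⟨ζ, rfl⟩ := isOpenQuotientMap_torusProj.surjective t
  simp only [← torusProj_add, (hχ.map₂ (hF.comp_add_right w) (· • ·)).torusLift_torusProj,
    (hχ.map₂ hF (· • ·)).torusLift_torusProj]
  rw [latticeChar_add_right, smul_smul, mul_left_comm, ← latticeChar_add, add_neg_cancel,
    latticeChar_zero, mul_one]

theorem hasDerivAt_latticeCoeff_comp_add [NormedSpace ℝ V] [IsScalarTower ℝ ℂ V]
    (hF : DoublyPeriodic F) (hd : ContDiff ℝ 1 F) (w : ℂ) (k : Freq) :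
    HasDerivAt (fun r : ℝ => latticeCoeff (fun ζ => F (ζ + r • w)) k)
      (latticeCoeff (fun ζ => fderiv ℝ F ζ w) k) 0 := by
  obtain rfl : ‹NormedSpace ℝ V› = NormedSpace.complexToReal :=
    NormedSpace.ext (funext₂ fun r x => (algebraMap_smul ℂ r x).symm)
  have hχ := doublyPeriodic_latticeChar (-k)
  have hF' : DoublyPeriodic fun ζ => fderiv ℝ F ζ w := hF.fderiv.comp (· w)
  have hc' : Continuous fun ζ => fderiv ℝ F ζ w :=
    (hd.continuous_fderiv one_ne_zero).clm_apply continuous_const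
  obtain ⟨K, hK⟩ := hF'.exists_norm_le hc'
  have hper (r : ℝ) : DoublyPeriodic fun ζ => latticeChar (-k) ζ • F (ζ + r • w) :=
    hχ.map₂ (hF.comp_add_right _) (· • ·)
  have hper' (r : ℝ) :
      DoublyPeriodic fun ζ => latticeChar (-k) ζ • fderiv ℝ F (ζ + r • w) w :=
    hχ.map₂ (hF'.comp_add_right (r • w)) (· • ·)
  have hint (r : ℝ) : Integrable (torusLift fun ζ => latticeChar (-k) ζ • F (ζ + r • w)) :=
    integrable_latticeChar_smul (hF.comp_add_right _)
      (hd.continuous.comp (continuous_add_const _)) _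
  have hint' :
      Integrable (torusLift fun ζ => latticeChar (-k) ζ • fderiv ℝ F (ζ + (0 : ℝ) • w) w) :=
    integrable_latticeChar_smul (hF'.comp_add_right _)
      (hc'.comp (continuous_add_const _)) _
  have hdiff := hasDerivAt_integral_of_dominated_loc_of_deriv_le (μ := volume) (x₀ := (0 : ℝ))
    (F := fun r => torusLift fun ζ => latticeChar (-k) ζ • F (ζ + r • w))
    (F' := fun r => torusLift fun ζ => latticeChar (-k) ζ • fderiv ℝ F (ζ + r • w) w)
    (bound := fun _ => K) univ_mem (.of_forall fun r => (hint r).1) (hint 0) hint'.1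
    (.of_forall fun t r _ => (hper' r).norm_torusLift_le
      (fun ζ => by simpa only [norm_smul, norm_latticeChar, one_mul] using hK _) t)
    (integrable_const K) (.of_forall fun t r _ => ?_)
  · simpa only [latticeCoeff_eq_integral (hF.comp_add_right _), latticeCoeff_eq_integral hF',
      zero_smul, add_zero] using hdiff.2
  · obtain ⟨ζ, rfl⟩ := isOpenQuotientMap_torusProj.surjective t
    simp only [(hper _).torusLift_torusProj, (hper' _).torusLift_torusProj]
    have hline : HasDerivAt (fun r : ℝ => ζ + r • w) w r := by
      simpa using ((hasDerivAt_id r).smul_const w).const_add ζ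
    exact ((hd.differentiable one_ne_zero _).hasFDerivAt.comp_hasDerivAt r hline).const_smul _

theorem hasDerivAt_latticeChar_smul_line (k : Freq) (w : ℂ) :
    HasDerivAt (fun r : ℝ => latticeChar k (r • w)) (2 * Real.pi * Complex.I * freqCLM k w) 0 := by
  simp only [latticeChar_eq_exp, map_smul, smul_eq_mul, Complex.ofReal_mul]
  have hlin : HasDerivAt (fun r : ℝ => 2 * Real.pi * Complex.I * ((r : ℂ) * freqCLM k w))
      (2 * Real.pi * Complex.I * freqCLM k w) 0 := by
    simpa using (((hasDerivAt_id (0 : ℝ)).ofReal_comp.mul_const (freqCLM k w : ℂ)).const_mul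
      (2 * Real.pi * Complex.I))
  simpa using hlin.cexp

theorem latticeCoeff_fderiv [NormedSpace ℝ V] [IsScalarTower ℝ ℂ V] (hF : DoublyPeriodic F)
    (hd : ContDiff ℝ 1 F) (w : ℂ) (k : Freq) :
    latticeCoeff (fun ζ => fderiv ℝ F ζ w) k
      = (2 * Real.pi * Complex.I * freqCLM k w) • latticeCoeff F k := by
  have hderiv := hasDerivAt_latticeCoeff_comp_add hF hd w k
  simp only [latticeCoeff_comp_add_right hF] at hderiv
  exact hderiv.unique ((hasDerivAt_latticeChar_smul_line k w).smul_const _)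

theorem latticeCoeff_latticeChar_smul (hF : DoublyPeriodic F) (l k : Freq) :
    latticeCoeff (fun ζ => latticeChar l ζ • F ζ) k = latticeCoeff F (k - l) := by
  rw [latticeCoeff_eq_integral hF,
    latticeCoeff_eq_integral ((doublyPeriodic_latticeChar l).map₂ hF (· • ·))]
  simp only [smul_smul, ← latticeChar_add, neg_sub, neg_add_eq_sub]

theorem latticeCoeff_const [CompleteSpace V]
    (v : V) (k : Freq) : latticeCoeff (fun _ => v) k = if k = 0 then v else 0 := by
  split_ifs with hk
  · subst hk
    rw [latticeCoeff_eq_integral (.const v)]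
    have hlift : torusLift (fun ζ => latticeChar (-0) ζ • v) = fun _ => v := funext fun t => by
      obtain ⟨ζ, rfl⟩ := isOpenQuotientMap_torusProj.surjective t
      rw [neg_zero, ((doublyPeriodic_latticeChar 0).comp (· • v)).torusLift_torusProj,
        latticeChar_zero, one_smul]
    rw [hlift, integral_const, probReal_univ, one_smul]
  · let : NormedSpace ℝ V := NormedSpace.complexToReal
    have hderiv := latticeCoeff_fderiv (.const v) contDiff_const ⟨k 0, k 1⟩ k
    have hpos : (freqCLM k ⟨k 0, k 1⟩ : ℂ) ≠ 0 := by
      rw [freqCLM_apply]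
      contrapose! hk
      have hsq : (k 0 : ℝ) * k 0 + k 1 * k 1 = 0 := by
        rw [← Complex.ofReal_eq_zero, ← hk]
      obtain ⟨h0, h1⟩ := mul_self_add_mul_self_eq_zero.1 hsq
      ext i
      fin_cases i
      · exact_mod_cast h0
      · exact_mod_cast h1
    have hzero : latticeCoeff (fun _ : ℂ => (0 : V)) k = 0 :=
      norm_le_zero_iff.1 (norm_latticeCoeff_le (.const 0) (fun _ => norm_zero.le) k)
    simp only [fderiv_fun_const, Pi.zero_apply, zero_apply, hzero] at hderiv
    exact (smul_eq_zero.1 hderiv.symm).resolve_left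
      (mul_ne_zero Complex.two_pi_I_ne_zero hpos)

theorem latticeCoeff_tsum {ι : Type*} [Countable ι] [CompleteSpace V] {F : ι → ℂ → V} {u : ι → ℝ}
    (hF : ∀ l, DoublyPeriodic (F l)) (hc : ∀ l, Continuous (F l)) (hu : Summable u)
    (hFu : ∀ l ζ, ‖F l ζ‖ ≤ u l) (k : Freq) :
    HasSum (fun l => latticeCoeff (F l) k) (latticeCoeff (fun ζ => ∑' l, F l ζ) k) := by
  have hχ := doublyPeriodic_latticeChar (-k)
  have hsum : DoublyPeriodic fun ζ => ∑' l, F l ζ := fun _ _ h => tsum_congr fun l => hF l h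
  simp only [latticeCoeff_eq_integral (hF _), latticeCoeff_eq_integral hsum]
  have hle (l ζ) : ‖latticeChar (-k) ζ • F l ζ‖ ≤ u l := by
    simpa only [norm_smul, norm_latticeChar, one_mul] using hFu l ζ
  refine hasSum_integral_of_dominated_convergence (fun l _ => u l)
    (fun l => (integrable_latticeChar_smul (hF l) (hc l) _).1)
    (fun l => .of_forall fun t => (hχ.map₂ (hF l) (· • ·)).norm_torusLift_le (hle l) t)
    (.of_forall fun _ => hu) (integrable_const _) (.of_forall fun t => ?_)
  obtain ⟨ζ, rfl⟩ := isOpenQuotientMap_torusProj.surjective t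
  simp only [(hχ.map₂ (hF _) (· • ·)).torusLift_torusProj,
    (hχ.map₂ hsum (· • ·)).torusLift_torusProj]
  exact (hu.of_norm_bounded fun l => hFu l ζ).hasSum.const_smul _

end Coefficients

theorem hasSum_sq_norm_latticeCoeff_complex {F : ℂ → ℂ} (hF : DoublyPeriodic F)
    (hc : Continuous F) : HasSum (fun k => ‖latticeCoeff F k‖ ^ 2) (∫ t, ‖torusLift F t‖ ^ 2) := by
  let F' : C(UnitAddTorus (Fin 2), ℂ) := ⟨torusLift F, hF.continuous_torusLift hc⟩
  have hsum := hasSum_sq_mFourierCoeff (ContinuousMap.toLp 2 volume ℂ F')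
  simp only [mFourierCoeff_toLp] at hsum
  have hae : ContinuousMap.toLp 2 volume ℂ F' =ᵐ[volume] F' := ContinuousMap.coeFn_toLp volume F'
  have hint : ∫ t, ‖ContinuousMap.toLp 2 volume ℂ F' t‖ ^ 2 = ∫ t, ‖F' t‖ ^ 2 :=
    integral_congr_ae (hae.fun_comp (‖·‖ ^ 2))
  rwa [hint] at hsum

theorem hasSum_sq_norm_latticeCoeff {E : Type*} [NormedAddCommGroup E] [InnerProductSpace ℂ E]
    [FiniteDimensional ℂ E] {F : ℂ → E} (hF : DoublyPeriodic F) (hc : Continuous F) :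
    HasSum (fun k => ‖latticeCoeff F k‖ ^ 2) (∫ t, ‖torusLift F t‖ ^ 2) := by
  have := FiniteDimensional.complete ℂ E
  let b := stdOrthonormalBasis ℂ E
  let F' (i) (ζ : ℂ) : ℂ := inner ℂ (b i) (F ζ)
  have hF' (i) : DoublyPeriodic (F' i) := hF.comp _
  have hc' (i) : Continuous (F' i) := continuous_const.inner hc
  have hint (i) : Integrable fun t => ‖torusLift (F' i) t‖ ^ 2 :=
    (((hF' i).continuous_torusLift (hc' i)).norm.pow 2).integrable_of_hasCompactSupport
      (HasCompactSupport.of_compactSpace _)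
  have hlift (t) : ‖torusLift F t‖ ^ 2 = ∑ i, ‖torusLift (F' i) t‖ ^ 2 := by
    obtain ⟨ζ, rfl⟩ := isOpenQuotientMap_torusProj.surjective t
    simp only [hF.torusLift_torusProj, (hF' _).torusLift_torusProj, F', b.sum_sq_norm_inner_right]
  have hinner (i k) : latticeCoeff (F' i) k = inner ℂ (b i) (latticeCoeff F k) :=
    latticeCoeff_clm_comp hF hc (innerSL ℂ (b i)) k
  simp only [hlift, ← b.sum_sq_norm_inner_right (latticeCoeff F _), ← hinner]
  rw [integral_finsetSum _ fun i _ => hint i]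
  exact hasSum_sum fun i _ => hasSum_sq_norm_latticeCoeff_complex (hF' i) (hc' i)

theorem enorm_sq_eq_ofReal_norm_sq {V : Type*} [NormedAddCommGroup V] (v : V) :
    ‖v‖ₑ ^ 2 = ENNReal.ofReal (‖v‖ ^ 2) := by
  rw [ENNReal.ofReal_pow (norm_nonneg v), ofReal_norm]

theorem tsum_enorm_sq_latticeCoeff {E : Type*} [NormedAddCommGroup E] [InnerProductSpace ℂ E]
    [FiniteDimensional ℂ E] {F : ℂ → E} (hF : DoublyPeriodic F) (hc : Continuous F) :
    ∑' k, ‖latticeCoeff F k‖ₑ ^ 2 = ∫⁻ t, ‖torusLift F t‖ₑ ^ 2 := by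
  have hsum := hasSum_sq_norm_latticeCoeff hF hc
  have hint : Integrable fun t => ‖torusLift F t‖ ^ 2 :=
    ((hF.continuous_torusLift hc).norm.pow 2).integrable_of_hasCompactSupport
      (HasCompactSupport.of_compactSpace _)
  simp only [enorm_sq_eq_ofReal_norm_sq]
  rw [← ENNReal.ofReal_tsum_of_nonneg (fun _ => by positivity) hsum.summable, hsum.tsum_eq,
    ofReal_integral_eq_lintegral_ofReal hint (.of_forall fun _ => by positivity)]

theorem ennreal_add_sq_le (a b : ENNReal) : (a + b) ^ 2 ≤ 2 * (a ^ 2 + b ^ 2) := by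
  obtain rfl | ha := eq_or_ne a ⊤
  · simp
  obtain rfl | hb := eq_or_ne b ⊤
  · simp
  lift a to NNReal using ha
  lift b to NNReal using hb
  exact_mod_cast add_sq_le (a := a) (b := b)

theorem tsum_enorm_sq_latticeCoeff_le {E : Type*} [NormedAddCommGroup E] [InnerProductSpace ℂ E]
    [FiniteDimensional ℂ E] {F G H : ℂ → E} (hF : DoublyPeriodic F) (hFc : Continuous F)
    (hG : DoublyPeriodic G) (hGc : Continuous G) (hH : DoublyPeriodic H) (hHc : Continuous H)
    {κ : ENNReal} (h : ∀ ζ, ‖F ζ‖ₑ ≤ κ * (‖G ζ‖ₑ + ‖H ζ‖ₑ)) :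
    ∑' k, ‖latticeCoeff F k‖ₑ ^ 2
      ≤ 2 * κ ^ 2 * (∑' k, ‖latticeCoeff G k‖ₑ ^ 2 + ∑' k, ‖latticeCoeff H k‖ₑ ^ 2) := by
  have hmeas := ((hG.continuous_torusLift hGc).enorm.measurable.pow_const 2)
  have hmeas' := ((hH.continuous_torusLift hHc).enorm.measurable.pow_const 2)
  rw [tsum_enorm_sq_latticeCoeff hF hFc, tsum_enorm_sq_latticeCoeff hG hGc,
    tsum_enorm_sq_latticeCoeff hH hHc, ← lintegral_add_left hmeas,
    ← lintegral_const_mul _ (by fun_prop)]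
  refine lintegral_mono fun t => ?_
  obtain ⟨ζ, rfl⟩ := isOpenQuotientMap_torusProj.surjective t
  rw [hF.torusLift_torusProj, hG.torusLift_torusProj, hH.torusLift_torusProj]
  calc ‖F ζ‖ₑ ^ 2 ≤ κ ^ 2 * (‖G ζ‖ₑ + ‖H ζ‖ₑ) ^ 2 := by
        rw [← mul_pow]
        gcongr
        exact h ζ
    _ ≤ κ ^ 2 * (2 * (‖G ζ‖ₑ ^ 2 + ‖H ζ‖ₑ ^ 2)) := by
        gcongr
        exact ennreal_add_sq_le _ _
    _ = 2 * κ ^ 2 * (‖G ζ‖ₑ ^ 2 + ‖H ζ‖ₑ ^ 2) := by ring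

end PeriodicFunctions

section WienerAlgebra

open scoped ENNReal NNReal

/-- The weight measuring the decay of Fourier coefficients in `wienerNorm`. -/
def Freq.weight (k : Freq) : ℕ := 1 + (k 0).natAbs + (k 1).natAbs

theorem Freq.one_le_weight (k : Freq) : 1 ≤ k.weight := by
  unfold Freq.weight
  omega

theorem Freq.weight_neg (k : Freq) : (-k).weight = k.weight := by simp [Freq.weight]

theorem Freq.weight_add_le (k l : Freq) : (k + l).weight ≤ k.weight * l.weight := by
  have h0 := Int.natAbs_add_le (k 0) (l 0)
  have h1 := Int.natAbs_add_le (k 1) (l 1)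
  simp only [Freq.weight, Pi.add_apply]
  rw [show ∀ a b c d : ℕ, (1 + a + b) * (1 + c + d) = 1 + (a + c) + (b + d) + (a + b) * (c + d)
    from fun _ _ _ _ => by ring]
  omega

theorem Freq.cast_weight (k : Freq) : (k.weight : ℝ) = 1 + |(k 0 : ℝ)| + |(k 1 : ℝ)| := by
  simp [Freq.weight, Nat.cast_natAbs]

/-- The norm `∑ₖ weight(k)ˢ ‖cₖ‖` of the weighted Wiener algebra, on families of Fourier
coefficients. -/
noncomputable def wienerNorm {V : Type*} [NormedAddCommGroup V] (s : ℕ) (c : Freq → V) : ℝ≥0∞ :=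
  ∑' k : Freq, (k.weight : ℝ≥0∞) ^ s * ‖c k‖ₑ

section

variable {V : Type*} [NormedAddCommGroup V]

theorem wienerNorm_zero_ne_top {c : Freq → V} : wienerNorm 0 c ≠ ⊤ ↔ Summable fun k => ‖c k‖ := by
  simp only [wienerNorm, pow_zero, one_mul, tsum_enorm_ne_top_iff_summable_norm]

theorem wienerNorm_mono {s t : ℕ} (h : s ≤ t) (c : Freq → V) : wienerNorm s c ≤ wienerNorm t c :=
  ENNReal.tsum_le_tsum fun k => by
    gcongr
    exact_mod_cast k.one_le_weight

theorem wienerNorm_add_le (s : ℕ) (c d : Freq → V) :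
    wienerNorm s (c + d) ≤ wienerNorm s c + wienerNorm s d := by
  rw [wienerNorm, wienerNorm, wienerNorm, ← ENNReal.tsum_add]
  refine ENNReal.tsum_le_tsum fun k => ?_
  rw [← mul_add]
  gcongr
  exact enorm_add_le _ _

theorem enorm_le_wienerNorm (s : ℕ) (c : Freq → V) (k : Freq) : ‖c k‖ₑ ≤ wienerNorm s c :=
  calc ‖c k‖ₑ = (k.weight : ℝ≥0∞) ^ 0 * ‖c k‖ₑ := by rw [pow_zero, one_mul]
    _ ≤ wienerNorm 0 c := ENNReal.le_tsum k
    _ ≤ wienerNorm s c := wienerNorm_mono s.zero_le c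

end

/-- The trigonometric series with Fourier coefficients `c`. -/
noncomputable def trigSeries {V : Type*} [NormedAddCommGroup V] [NormedSpace ℂ V] (c : Freq → V)
    (ζ : ℂ) : V := ∑' k, latticeChar k ζ • c k

section TrigSeries

variable {V : Type*} [NormedAddCommGroup V] [NormedSpace ℂ V]

theorem doublyPeriodic_trigSeries (c : Freq → V) : DoublyPeriodic (trigSeries c) :=
  fun _ _ h => tsum_congr fun k => by rw [doublyPeriodic_latticeChar k h]

theorem norm_latticeChar_smul (k : Freq) (ζ : ℂ) (v : V) : ‖latticeChar k ζ • v‖ = ‖v‖ := by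
  rw [norm_smul, norm_latticeChar, one_mul]

theorem enorm_trigSeries_le (c : Freq → V) (ζ : ℂ) : ‖trigSeries c ζ‖ₑ ≤ wienerNorm 0 c := by
  refine enorm_tsum_le_tsum_enorm.trans_eq (tsum_congr fun k => ?_)
  rw [pow_zero, one_mul, enorm_eq_iff_norm_eq, norm_latticeChar_smul]

variable [CompleteSpace V]

theorem hasSum_trigSeries {c : Freq → V} (hc : wienerNorm 0 c ≠ ⊤) (ζ : ℂ) :
    HasSum (fun k => latticeChar k ζ • c k) (trigSeries c ζ) := by
  refine (Summable.of_norm ?_).hasSum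
  simpa only [norm_latticeChar_smul] using wienerNorm_zero_ne_top.1 hc

theorem continuous_trigSeries {c : Freq → V} (hc : wienerNorm 0 c ≠ ⊤) :
    Continuous (trigSeries c) :=
  continuous_tsum (fun _ => continuous_latticeChar_smul continuous_const _)
    (wienerNorm_zero_ne_top.1 hc) fun k ζ => (norm_latticeChar_smul k ζ (c k)).le

theorem latticeCoeff_trigSeries {c : Freq → V} (hc : wienerNorm 0 c ≠ ⊤) :
    latticeCoeff (trigSeries c) = c := by
  funext k
  refine (latticeCoeff_tsum (fun l => (doublyPeriodic_latticeChar l).comp (· • c l))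
    (fun l => continuous_latticeChar_smul continuous_const l) (wienerNorm_zero_ne_top.1 hc)
    (fun l ζ => (norm_latticeChar_smul l ζ (c l)).le) k).unique ?_
  convert hasSum_ite_eq k (c k) using 2 with l
  rw [latticeCoeff_latticeChar_smul (.const (c l)), latticeCoeff_const]
  simp only [sub_eq_zero, eq_comm (a := k)]
  split_ifs with h
  · rw [h]
  · rfl

theorem latticeCoeff_trigSeries_sub {b d : Freq → V} (hb : wienerNorm 0 b ≠ ⊤)
    (hd : wienerNorm 0 d ≠ ⊤) : latticeCoeff (trigSeries b - trigSeries d) = b - d := by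
  funext k
  refine (latticeCoeff_sub (doublyPeriodic_trigSeries b) (doublyPeriodic_trigSeries d)
    (continuous_trigSeries hb) (continuous_trigSeries hd) k).trans ?_
  rw [latticeCoeff_trigSeries hb, latticeCoeff_trigSeries hd, Pi.sub_apply]

theorem trigSeries_latticeCoeff {F : ℂ → V} (hF : DoublyPeriodic F) (hc : Continuous F)
    (hW : wienerNorm 0 (latticeCoeff F) ≠ ⊤) : trigSeries (latticeCoeff F) = F := by
  funext ζ
  refine (SeparatingDual.eq_iff_forall_dual_eq (R := ℂ)).2 fun L => ?_
  let F' : C(UnitAddTorus (Fin 2), ℂ) :=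
    ⟨torusLift fun ζ => L (F ζ), (hF.comp L).continuous_torusLift (L.continuous.comp hc)⟩
  have hcoeff (k) : UnitAddTorus.mFourierCoeff F' k = L (latticeCoeff F k) :=
    latticeCoeff_clm_comp hF hc L k
  have hsummable : Summable (UnitAddTorus.mFourierCoeff F') := by
    have hF : Summable (latticeCoeff F) := .of_norm (wienerNorm_zero_ne_top.1 hW)
    exact (hF.mapL L).congr fun k => (hcoeff k).symm
  have hseries := UnitAddTorus.hasSum_mFourier_series_apply_of_summable hsummable (torusProj ζ)
  have hL := (hasSum_trigSeries hW ζ).mapL L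
  simp only [map_smul, smul_eq_mul] at hL
  have hval : F' (torusProj ζ) = L (F ζ) := (hF.comp L).torusLift_torusProj ζ
  simp only [hcoeff, smul_eq_mul, mul_comm (L _), hval] at hseries
  exact hL.unique hseries

end TrigSeries

section Derivatives

variable {V : Type*} [NormedAddCommGroup V] [NormedSpace ℝ V] [NormedSpace ℂ V]

theorem norm_freqCLM_le (k : Freq) : ‖freqCLM k‖ ≤ k.weight := by
  refine ContinuousLinearMap.opNorm_le_bound _ (Nat.cast_nonneg _) fun w => ?_
  rw [freqCLM_apply, Real.norm_eq_abs, k.cast_weight]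
  calc |(k 0 : ℝ) * w.re + k 1 * w.im| ≤ |(k 0 : ℝ)| * |w.re| + |(k 1 : ℝ)| * |w.im| := by
        simpa only [abs_mul] using abs_add_le ((k 0 : ℝ) * w.re) (k 1 * w.im)
    _ ≤ |(k 0 : ℝ)| * ‖w‖ + |(k 1 : ℝ)| * ‖w‖ := by
        gcongr
        exacts [w.abs_re_le_norm, w.abs_im_le_norm]
    _ ≤ (1 + |(k 0 : ℝ)| + |(k 1 : ℝ)|) * ‖w‖ := by linarith [norm_nonneg w]

theorem weight_le_three_mul_norm_freqCLM {k : Freq} (hk : k ≠ 0) :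
    (k.weight : ℝ) ≤ 3 * ‖freqCLM k‖ := by
  have h0 : |(k 0 : ℝ)| ≤ ‖freqCLM k‖ := by
    simpa [freqCLM_apply] using (freqCLM k).le_opNorm 1
  have h1 : |(k 1 : ℝ)| ≤ ‖freqCLM k‖ := by
    simpa [freqCLM_apply] using (freqCLM k).le_opNorm Complex.I
  have hone : (1 : ℝ) ≤ ‖freqCLM k‖ := by
    obtain ⟨i, hi⟩ := Function.ne_iff.1 hk
    have habs : (1 : ℝ) ≤ |(k i : ℝ)| := by exact_mod_cast Int.one_le_abs hi
    fin_cases i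
    exacts [habs.trans h0, habs.trans h1]
  rw [k.cast_weight]
  linarith

/-- The Fourier coefficients of the derivative of a function with Fourier coefficients `c`. -/
noncomputable def fderivCoeff (c : Freq → V) (k : Freq) : ℂ →L[ℝ] V :=
  (freqCLM k).smulRight ((2 * Real.pi * Complex.I) • c k)

theorem norm_fderivCoeff (c : Freq → V) (k : Freq) :
    ‖fderivCoeff c k‖ = 2 * Real.pi * (‖freqCLM k‖ * ‖c k‖) := by
  rw [fderivCoeff, ContinuousLinearMap.norm_smulRight_apply, norm_smul]
  simp [abs_of_pos Real.pi_pos]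
  ring

theorem wienerNorm_fderivCoeff_le (s : ℕ) (c : Freq → V) :
    wienerNorm s (fderivCoeff c) ≤ ENNReal.ofReal (2 * Real.pi) * wienerNorm (s + 1) c := by
  rw [wienerNorm, wienerNorm, ← ENNReal.tsum_mul_left]
  refine ENNReal.tsum_le_tsum fun k => ?_
  have hk : ‖fderivCoeff c k‖ₑ ≤ ENNReal.ofReal (2 * Real.pi) * (k.weight * ‖c k‖ₑ) := by
    rw [← ofReal_norm, ← ofReal_norm, ← ENNReal.ofReal_natCast, norm_fderivCoeff,
      ← ENNReal.ofReal_mul (by positivity), ← ENNReal.ofReal_mul (by positivity)]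
    gcongr
    exact norm_freqCLM_le k
  calc _ ≤ (k.weight : ℝ≥0∞) ^ s * (ENNReal.ofReal (2 * Real.pi) * (k.weight * ‖c k‖ₑ)) := by gcongr
    _ = _ := by ring

theorem weight_mul_enorm_le_enorm_fderivCoeff {k : Freq} (hk : k ≠ 0) (c : Freq → V) :
    (k.weight : ℝ≥0∞) * ‖c k‖ₑ ≤ ‖fderivCoeff c k‖ₑ := by
  rw [← ofReal_norm, ← ofReal_norm, ← ENNReal.ofReal_natCast,
    ← ENNReal.ofReal_mul (by positivity), norm_fderivCoeff, ← mul_assoc]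
  refine ENNReal.ofReal_le_ofReal (mul_le_mul_of_nonneg_right ?_ (norm_nonneg _))
  nlinarith [weight_le_three_mul_norm_freqCLM hk, Real.pi_gt_three, norm_nonneg (freqCLM k)]

theorem wienerNorm_succ_le (s : ℕ) (c : Freq → V) :
    wienerNorm (s + 1) c ≤ ‖c 0‖ₑ + wienerNorm s (fderivCoeff c) := by
  rw [wienerNorm, wienerNorm, ENNReal.tsum_eq_add_tsum_ite (0 : Freq)]
  gcongr
  · simp [Freq.weight]
  · split_ifs with hk
    · exact zero_le
    · rw [pow_succ, mul_assoc]
      gcongr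
      exact weight_mul_enorm_le_enorm_fderivCoeff hk c

variable [IsScalarTower ℝ ℂ V]

/-- Evaluation at a vector, as a complex-linear map on real-linear maps. -/
noncomputable def evalCLM {W : Type*} [NormedAddCommGroup W] [NormedSpace ℝ W] (w : W) :
    (W →L[ℝ] V) →L[ℂ] V :=
  { ContinuousLinearMap.apply ℝ V w with map_smul' := fun _ _ => rfl }

theorem latticeCoeff_fderiv_eq_fderivCoeff [CompleteSpace V] {F : ℂ → V} (hF : DoublyPeriodic F)
    (hd : ContDiff ℝ 1 F) : latticeCoeff (fderiv ℝ F) = fderivCoeff (latticeCoeff F) := by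
  ext k w
  have heval := latticeCoeff_clm_comp hF.fderiv (hd.continuous_fderiv one_ne_zero) (evalCLM w) k
  have hsmul (r : ℝ) (v : V) : r • v = (r : ℂ) • v := (algebraMap_smul ℂ r v).symm
  rw [fderivCoeff, ContinuousLinearMap.smulRight_apply, hsmul, smul_smul, mul_comm,
    ← latticeCoeff_fderiv hF hd]
  exact heval.symm

theorem hasFDerivAt_latticeChar_smul (k : Freq) (c : Freq → V) (ζ : ℂ) :
    HasFDerivAt (fun ζ => latticeChar k ζ • c k) (latticeChar k ζ • fderivCoeff c k) ζ := by
  have hphase : HasFDerivAt (fun w => (freqCLM k w : ℂ)) (Complex.ofRealCLM.comp (freqCLM k)) ζ :=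
    (Complex.ofRealCLM.comp (freqCLM k)).hasFDerivAt
  have hexp := (hphase.const_mul (2 * Real.pi * Complex.I)).cexp
  simp only [← latticeChar_eq_exp] at hexp
  refine (hexp.smul_const (c k)).congr_fderiv (ContinuousLinearMap.ext fun w => ?_)
  have hsmul (r : ℝ) (v : V) : r • v = (r : ℂ) • v := (algebraMap_smul ℂ r v).symm
  simp only [fderivCoeff, ContinuousLinearMap.smulRight_apply, smul_apply,
    ContinuousLinearMap.comp_apply, Complex.ofRealCLM_apply, smul_eq_mul, hsmul, smul_smul]
  ring_nf

variable [CompleteSpace V]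

theorem hasFDerivAt_trigSeries {c : Freq → V} (hc : wienerNorm 1 c ≠ ⊤) (ζ : ℂ) :
    HasFDerivAt (trigSeries c) (trigSeries (fderivCoeff c) ζ) ζ := by
  have hc0 : wienerNorm 0 c ≠ ⊤ := ne_top_of_le_ne_top hc (wienerNorm_mono zero_le_one c)
  have hc' : wienerNorm 0 (fderivCoeff c) ≠ ⊤ :=
    ne_top_of_le_ne_top (ENNReal.mul_ne_top ENNReal.ofReal_ne_top hc)
      (wienerNorm_fderivCoeff_le 0 c)
  exact hasFDerivAt_tsum (wienerNorm_zero_ne_top.1 hc') (hasFDerivAt_latticeChar_smul · c ·)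
    (fun k ζ => (norm_latticeChar_smul (V := ℂ →L[ℝ] V) k ζ _).le)
    (hasSum_trigSeries hc0 0).summable ζ

theorem fderiv_trigSeries {c : Freq → V} (hc : wienerNorm 1 c ≠ ⊤) :
    fderiv ℝ (trigSeries c) = trigSeries (fderivCoeff c) :=
  funext fun ζ => (hasFDerivAt_trigSeries hc ζ).fderiv

end Derivatives

theorem contDiff_trigSeries {V : Type*} [NormedAddCommGroup V] [NormedSpace ℝ V] [NormedSpace ℂ V]
    [IsScalarTower ℝ ℂ V] [CompleteSpace V] (s : ℕ) {c : Freq → V} (hc : wienerNorm s c ≠ ⊤) :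
    ContDiff ℝ s (trigSeries c) := by
  induction s generalizing V with
  | zero => exact contDiff_zero.2 (continuous_trigSeries hc)
  | succ s ih =>
    have hderiv (ζ) := hasFDerivAt_trigSeries
      (ne_top_of_le_ne_top hc (wienerNorm_mono (Nat.le_add_left 1 s) c)) ζ
    rw [Nat.cast_succ, contDiff_succ_iff_fderiv, funext fun ζ => (hderiv ζ).fderiv]
    exact ⟨fun ζ => (hderiv ζ).differentiableAt, fun h => absurd h (by simp),
      ih (ne_top_of_le_ne_top (ENNReal.mul_ne_top ENNReal.ofReal_ne_top hc)
        (wienerNorm_fderivCoeff_le s c))⟩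


section Product

theorem wienerNorm_comp_add_right_le {V : Type*} [NormedAddCommGroup V] (c : Freq → V) (l : Freq)
    (s : ℕ) : wienerNorm s (fun k => c (k + l)) ≤ (l.weight : ℝ≥0∞) ^ s * wienerNorm s c := by
  have hweight (k : Freq) : (k.weight : ℝ≥0∞) ≤ l.weight * (k + l).weight := by
    have := (k + l).weight_add_le (-l)
    rw [add_neg_cancel_right, Freq.weight_neg, mul_comm] at this
    exact_mod_cast this
  calc wienerNorm s (fun k => c (k + l))
      ≤ ∑' k, (l.weight : ℝ≥0∞) ^ s * (((k + l).weight : ℝ≥0∞) ^ s * ‖c (k + l)‖ₑ) :=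
        ENNReal.tsum_le_tsum fun k => by
          rw [← mul_assoc, ← mul_pow]
          gcongr
          exact hweight k
    _ = (l.weight : ℝ≥0∞) ^ s * wienerNorm s c := by
        rw [ENNReal.tsum_mul_left]
        exact congrArg _ ((Equiv.addRight l).tsum_eq fun k => (k.weight : ℝ≥0∞) ^ s * ‖c k‖ₑ)

variable {W V : Type*} [NormedAddCommGroup W] [NormedSpace ℝ W] [NormedSpace ℂ W]
  [NormedAddCommGroup V] [NormedSpace ℝ V] [NormedSpace ℂ V] [IsScalarTower ℝ ℂ V]

/-- `halfPart σ w L = (L w + σ L(iw)) / 2`. For `σ = -i` and `σ = i` these are the complex-linear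
and the antilinear part of `L`, evaluated at `w`. -/
noncomputable def halfPart (σ : ℂ) (w : W) : (W →L[ℝ] V) →L[ℂ] V :=
  (1 / 2 : ℂ) • (evalCLM w + σ • evalCLM (Complex.I • w))

theorem halfPart_apply (σ : ℂ) (w : W) (L : W →L[ℝ] V) :
    halfPart σ w L = (1 / 2 : ℂ) • (L w + σ • L (Complex.I • w)) := rfl

theorem norm_halfPart_apply_le {σ : ℂ} (hσ : ‖σ‖ = 1) (w : W) (L : W →L[ℝ] V) :
    ‖halfPart σ w L‖ ≤ ‖L‖ * ‖w‖ := by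
  have hIw : ‖Complex.I • w‖ = ‖w‖ := by rw [norm_smul, Complex.norm_I, one_mul]
  calc ‖halfPart σ w L‖ ≤ 1 / 2 * (‖L w‖ + ‖L (Complex.I • w)‖) := by
        rw [halfPart_apply, norm_smul, show ‖(1 / 2 : ℂ)‖ = 1 / 2 by norm_num]
        gcongr
        exact (norm_add_le _ _).trans_eq (by rw [norm_smul, hσ, one_mul])
    _ ≤ ‖L‖ * ‖w‖ := by linarith [L.le_opNorm w, hIw ▸ L.le_opNorm (Complex.I • w)]

variable [IsScalarTower ℝ ℂ W]

theorem map_smul_eq_halfPart_add_halfPart (L : W →L[ℝ] V) (z : ℂ) (w : W) :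
    L (z • w) = z • halfPart (-Complex.I) w L + starRingEnd ℂ z • halfPart Complex.I w L := by
  obtain ⟨a, b, rfl⟩ : ∃ a b : ℝ, z = a + b * Complex.I := ⟨z.re, z.im, z.re_add_im.symm⟩
  have hz : ((a : ℂ) + b * Complex.I) • w = a • w + b • Complex.I • w := by
    rw [← algebraMap_smul ℂ a w, ← algebraMap_smul ℂ b, add_smul, mul_smul]
    rfl
  have hsmul (r : ℝ) (v : V) : r • v = (r : ℂ) • v := (algebraMap_smul ℂ r v).symm
  rw [hz, map_add, map_smul, map_smul, halfPart_apply, halfPart_apply, hsmul, hsmul, map_add,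
    map_mul, Complex.conj_ofReal, Complex.conj_ofReal, Complex.conj_I]
  match_scalars
  · ring
  · linear_combination (b : ℂ) * Complex.I_sq

variable [CompleteSpace V] {A : ℂ → W →L[ℝ] V}

theorem norm_latticeCoeff_clm_apply_latticeChar_le (hA : DoublyPeriodic A) (hc : Continuous A)
    (l : Freq) (w : W) (k : Freq) :
    ‖latticeCoeff (fun ζ => A ζ (latticeChar l ζ • w)) k‖
      ≤ (‖latticeCoeff A (k - l)‖ + ‖latticeCoeff A (k + l)‖) * ‖w‖ := by
  let P (σ : ℂ) (ζ : ℂ) : V := halfPart σ w (A ζ)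
  have hP (σ) : DoublyPeriodic (P σ) := hA.comp _
  have hPc (σ) : Continuous (P σ) := (halfPart σ w).continuous.comp hc
  simp only [map_smul_eq_halfPart_add_halfPart, ← latticeChar_neg]
  rw [latticeCoeff_add ((doublyPeriodic_latticeChar l).map₂ (hP _) (· • ·))
      ((doublyPeriodic_latticeChar (-l)).map₂ (hP _) (· • ·))
      (continuous_latticeChar_smul (hPc _) l) (continuous_latticeChar_smul (hPc _) (-l)),
    latticeCoeff_latticeChar_smul (hP _), latticeCoeff_latticeChar_smul (hP _),
    latticeCoeff_clm_comp hA hc, latticeCoeff_clm_comp hA hc, sub_neg_eq_add, add_mul]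
  exact (norm_add_le _ _).trans (add_le_add (norm_halfPart_apply_le (by simp) w _)
    (norm_halfPart_apply_le (by simp) w _))

variable [CompleteSpace W]

theorem enorm_latticeCoeff_clm_apply_le (hA : DoublyPeriodic A) (hAc : Continuous A)
    {c : Freq → W} (hc : wienerNorm 0 c ≠ ⊤) (k : Freq) :
    ‖latticeCoeff (fun ζ => A ζ (trigSeries c ζ)) k‖ₑ
      ≤ ∑' l, (‖latticeCoeff A (k - l)‖ₑ + ‖latticeCoeff A (k + l)‖ₑ) * ‖c l‖ₑ := by
  obtain ⟨K, hK⟩ := hA.exists_norm_le hAc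
  have hterm (l) (ζ) : ‖A ζ (latticeChar l ζ • c l)‖ ≤ K * ‖c l‖ :=
    ((A ζ).le_of_opNorm_le (hK ζ) _).trans_eq (by rw [norm_latticeChar_smul])
  have hsum := latticeCoeff_tsum
    (fun l => hA.map₂ ((doublyPeriodic_latticeChar l).comp (· • c l)) fun L w => L w)
    (fun l => hAc.clm_apply (continuous_latticeChar_smul continuous_const l))
    ((wienerNorm_zero_ne_top.1 hc).mul_left K) hterm k
  have hseries (ζ) : ∑' l, A ζ (latticeChar l ζ • c l) = A ζ (trigSeries c ζ) :=
    ((hasSum_trigSeries hc ζ).mapL (A ζ)).tsum_eq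
  simp only [hseries] at hsum
  rw [← hsum.tsum_eq]
  refine enorm_tsum_le_tsum_enorm.trans (ENNReal.tsum_le_tsum fun l => ?_)
  rw [← ofReal_norm, ← ofReal_norm, ← ofReal_norm, ← ofReal_norm,
    ← ENNReal.ofReal_add (norm_nonneg _) (norm_nonneg _), ← ENNReal.ofReal_mul (by positivity)]
  exact ENNReal.ofReal_le_ofReal (norm_latticeCoeff_clm_apply_latticeChar_le hA hAc l _ k)

theorem wienerNorm_latticeCoeff_clm_apply_le (s : ℕ) (hA : DoublyPeriodic A) (hAc : Continuous A)
    {c : Freq → W} (hc : wienerNorm 0 c ≠ ⊤) :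
    wienerNorm s (latticeCoeff fun ζ => A ζ (trigSeries c ζ))
      ≤ 2 * wienerNorm s (latticeCoeff A) * wienerNorm s c := by
  have hshift (l : Freq) := wienerNorm_comp_add_right_le (latticeCoeff A) l s
  calc wienerNorm s (latticeCoeff fun ζ => A ζ (trigSeries c ζ))
      ≤ ∑' (k : Freq) (l : Freq), (k.weight : ℝ≥0∞) ^ s *
          ((‖latticeCoeff A (k - l)‖ₑ + ‖latticeCoeff A (k + l)‖ₑ) * ‖c l‖ₑ) :=
        ENNReal.tsum_le_tsum fun k => by
          rw [ENNReal.tsum_mul_left]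
          gcongr
          exact enorm_latticeCoeff_clm_apply_le hA hAc hc k
    _ = ∑' l : Freq, (∑' k : Freq, (k.weight : ℝ≥0∞) ^ s * ‖latticeCoeff A (k + -l)‖ₑ
          + ∑' k : Freq, (k.weight : ℝ≥0∞) ^ s * ‖latticeCoeff A (k + l)‖ₑ) * ‖c l‖ₑ := by
        rw [ENNReal.tsum_comm]
        simp only [← ENNReal.tsum_add, ← mul_add, ← ENNReal.tsum_mul_right, mul_assoc,
          sub_eq_add_neg]
    _ ≤ ∑' l : Freq, 2 * wienerNorm s (latticeCoeff A) * ((l.weight : ℝ≥0∞) ^ s * ‖c l‖ₑ) :=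
        ENNReal.tsum_le_tsum fun l => by
          have hneg := hshift (-l)
          rw [l.weight_neg] at hneg
          calc _
              ≤ ((l.weight : ℝ≥0∞) ^ s * wienerNorm s (latticeCoeff A)
                + (l.weight : ℝ≥0∞) ^ s * wienerNorm s (latticeCoeff A)) * ‖c l‖ₑ := by
                gcongr
                exacts [hneg, hshift l]
            _ = _ := by ring
    _ = 2 * wienerNorm s (latticeCoeff A) * wienerNorm s c := ENNReal.tsum_mul_left

end Product

section Embedding

variable {V : Type*} [NormedAddCommGroup V] [NormedSpace ℝ V] [NormedSpace ℂ V]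
  [IsScalarTower ℝ ℂ V] [CompleteSpace V]

theorem weight_pow_mul_norm_latticeCoeff_le {n : ℕ} {F : ℂ → V} (hF : DoublyPeriodic F)
    (hd : ContDiff ℝ n F) {K : ℝ} (hK : ∀ ζ, ‖iteratedFDeriv ℝ n F ζ‖ ≤ K) {k : Freq}
    (hk : k ≠ 0) : (k.weight : ℝ) ^ n * ‖latticeCoeff F k‖ ≤ K := by
  induction n generalizing V with
  | zero =>
    simp only [norm_iteratedFDeriv_zero] at hK
    simpa only [pow_zero, one_mul] using norm_latticeCoeff_le hF hK k
  | succ n ih =>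
    rw [Nat.cast_succ, contDiff_succ_iff_fderiv] at hd
    have hd1 : ContDiff ℝ 1 F := contDiff_one_iff_fderiv.2 ⟨hd.1, hd.2.2.continuous⟩
    have hstep : (k.weight : ℝ) * ‖latticeCoeff F k‖ ≤ ‖latticeCoeff (fderiv ℝ F) k‖ := by
      have := weight_mul_enorm_le_enorm_fderivCoeff hk (latticeCoeff F)
      rw [← latticeCoeff_fderiv_eq_fderivCoeff hF hd1] at this
      simpa using ENNReal.toReal_mono enorm_ne_top this
    calc (k.weight : ℝ) ^ (n + 1) * ‖latticeCoeff F k‖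
        = (k.weight : ℝ) ^ n * (k.weight * ‖latticeCoeff F k‖) := by ring
      _ ≤ (k.weight : ℝ) ^ n * ‖latticeCoeff (fderiv ℝ F) k‖ := by gcongr
      _ ≤ K := ih hF.fderiv hd.2.2 fun ζ => by rw [norm_iteratedFDeriv_fderiv]; exact hK ζ

theorem norm_le_weight (k : Freq) : ‖k‖ ≤ k.weight := by
  rw [pi_norm_le_iff_of_nonneg (Nat.cast_nonneg _), Fin.forall_fin_two, k.cast_weight]
  simp only [Int.norm_eq_abs]
  constructor <;> linarith [abs_nonneg (k 0 : ℝ), abs_nonneg (k 1 : ℝ)]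

theorem wienerNorm_zero_latticeCoeff_le {F : ℂ → V} (hF : DoublyPeriodic F)
    (hd : ContDiff ℝ 3 F) {K : ℝ} (hK0 : ∀ ζ, ‖F ζ‖ ≤ K)
    (hK3 : ∀ ζ, ‖iteratedFDeriv ℝ 3 F ζ‖ ≤ K) :
    wienerNorm 0 (latticeCoeff F) ≤ ENNReal.ofReal (K * (1 + ∑' k : Freq, ‖k‖ ^ (-3 : ℝ))) := by
  have hsum := EisensteinSeries.summable_one_div_norm_rpow (k := 3) (by norm_num)
  have hK : 0 ≤ K := (norm_nonneg _).trans (hK0 0)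
  rw [wienerNorm, ENNReal.tsum_eq_add_tsum_ite (0 : Freq), mul_add, mul_one,
    ENNReal.ofReal_add hK (mul_nonneg hK (tsum_nonneg fun _ => by positivity)), ← tsum_mul_left,
    ENNReal.ofReal_tsum_of_nonneg (fun _ => by positivity) (hsum.mul_left K)]
  simp only [pow_zero, one_mul, ← ofReal_norm]
  gcongr with k
  · exact norm_latticeCoeff_le hF hK0 0
  · split_ifs with hk
    · exact zero_le
    · have hpos : 0 < ‖k‖ := norm_pos_iff.2 hk
      refine ENNReal.ofReal_le_ofReal ?_
      rw [Real.rpow_neg hpos.le, ← div_eq_mul_inv, le_div_iff₀ (by positivity), mul_comm]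
      norm_cast
      calc ‖k‖ ^ 3 * ‖latticeCoeff F k‖ ≤ (k.weight : ℝ) ^ 3 * ‖latticeCoeff F k‖ := by
            gcongr
            exact norm_le_weight k
        _ ≤ K := weight_pow_mul_norm_latticeCoeff_le hF hd hK3 hk

theorem wienerNorm_succ_latticeCoeff_le (s : ℕ) {F : ℂ → V} (hF : DoublyPeriodic F)
    (hd : ContDiff ℝ 1 F) :
    wienerNorm (s + 1) (latticeCoeff F)
      ≤ ‖latticeCoeff F 0‖ₑ + wienerNorm s (latticeCoeff (fderiv ℝ F)) := by
  rw [latticeCoeff_fderiv_eq_fderivCoeff hF hd]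
  exact wienerNorm_succ_le s _

end Embedding

theorem wienerNorm_latticeCoeff_ne_top {V : Type*} [NormedAddCommGroup V] [NormedSpace ℝ V]
    [NormedSpace ℂ V] [IsScalarTower ℝ ℂ V] [CompleteSpace V] (s : ℕ) {F : ℂ → V}
    (hF : DoublyPeriodic F) (hd : ContDiff ℝ (s + 3 : ℕ) F) :
    wienerNorm s (latticeCoeff F) ≠ ⊤ := by
  induction s generalizing V with
  | zero =>
    obtain ⟨K₀, hK₀⟩ := hF.exists_norm_le hd.continuous
    obtain ⟨K₃, hK₃⟩ := (hF.iteratedFDeriv 3).exists_norm_le (hd.continuous_iteratedFDeriv le_rfl)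
    exact ne_top_of_le_ne_top ENNReal.ofReal_ne_top (wienerNorm_zero_latticeCoeff_le hF hd
      (fun ζ => (hK₀ ζ).trans (le_max_left K₀ K₃)) fun ζ => (hK₃ ζ).trans (le_max_right K₀ K₃))
  | succ s ih =>
    rw [Nat.add_right_comm, Nat.cast_succ, contDiff_succ_iff_fderiv] at hd
    have hd1 : ContDiff ℝ 1 F := contDiff_one_iff_fderiv.2 ⟨hd.1, hd.2.2.continuous⟩
    exact ne_top_of_le_ne_top (ENNReal.add_ne_top.2 ⟨enorm_ne_top, ih hF.fderiv hd.2.2⟩)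
      (wienerNorm_succ_latticeCoeff_le s hF hd1)


theorem enorm_latticeCoeff_le_of_enorm_le {E : Type*} [NormedAddCommGroup E] [NormedSpace ℂ E]
    {F : ℂ → E} (hF : DoublyPeriodic F) {K : ℝ≥0∞} (hK : K ≠ ⊤) (hFK : ∀ ζ, ‖F ζ‖ₑ ≤ K)
    (k : Freq) : ‖latticeCoeff F k‖ₑ ≤ K := by
  have hnorm (ζ : ℂ) : ‖F ζ‖ ≤ K.toReal := (toReal_enorm (F ζ)).symm.le.trans
    (ENNReal.toReal_mono hK (hFK ζ))
  rw [← ofReal_norm, ← ENNReal.ofReal_toReal hK]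
  exact ENNReal.ofReal_le_ofReal (norm_latticeCoeff_le hF hnorm k)

section PostcompFDeriv

variable {E V : Type*} [NormedAddCommGroup E] [NormedSpace ℝ E] [NormedAddCommGroup V]
  [NormedSpace ℝ V]

/-- The operator `L ↦ DΦ(y) ∘ L`, through which the chain rule reads `D(Φ ∘ f) = (postcompFDeriv Φ
∘ f) · Df`. -/
noncomputable def postcompFDeriv (Φ : E → V)
    (y : E) : (ℂ →L[ℝ] E) →L[ℝ] (ℂ →L[ℝ] V) :=
  ContinuousLinearMap.compL ℝ ℂ E V (fderiv ℝ Φ y)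

theorem contDiff_postcompFDeriv {n : ℕ} {Φ : E → V} (hΦ : ContDiff ℝ (n + 1 : ℕ) Φ) :
    ContDiff ℝ n (postcompFDeriv Φ) := by
  have hderiv : ContDiff ℝ n (fderiv ℝ Φ) := hΦ.fderiv_right (by norm_cast)
  exact (ContinuousLinearMap.contDiff (F := (ℂ →L[ℝ] E) →L[ℝ] ℂ →L[ℝ] V)
    (ContinuousLinearMap.compL ℝ ℂ E V)).comp hderiv

theorem hasCompactSupport_postcompFDeriv {Φ : E → V} (hΦ : HasCompactSupport Φ) :
    HasCompactSupport (postcompFDeriv Φ) :=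
  (hΦ.fderiv ℝ).comp_left (map_zero _)

end PostcompFDeriv

theorem enorm_iteratedFDeriv_trigSeries_le {E : Type*} [NormedAddCommGroup E] [NormedSpace ℝ E]
    [NormedSpace ℂ E] [IsScalarTower ℝ ℂ E] [CompleteSpace E] (n : ℕ) {c : Freq → E}
    (hc : wienerNorm n c ≠ ⊤) (ζ : ℂ) :
    ‖iteratedFDeriv ℝ n (trigSeries c) ζ‖ₑ ≤ ENNReal.ofReal (2 * Real.pi) ^ n * wienerNorm n c := by
  induction n generalizing E with
  | zero =>
    rw [← ofReal_norm, norm_iteratedFDeriv_zero, ofReal_norm, pow_zero, one_mul]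
    exact enorm_trigSeries_le c ζ
  | succ n ih =>
    have hc1 := ne_top_of_le_ne_top hc (wienerNorm_mono (Nat.le_add_left 1 n) c)
    have hle := wienerNorm_fderivCoeff_le n c
    have hc' := ne_top_of_le_ne_top (ENNReal.mul_ne_top ENNReal.ofReal_ne_top hc) hle
    rw [← ofReal_norm, ← norm_iteratedFDeriv_fderiv, ofReal_norm, fderiv_trigSeries hc1, pow_succ,
      mul_assoc]
    exact (ih hc').trans (by gcongr)

section Composition

variable {E : Type*} [NormedAddCommGroup E] [NormedSpace ℝ E] [NormedSpace ℂ E]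
  [IsScalarTower ℝ ℂ E] [CompleteSpace E]

theorem norm_iteratedFDeriv_trigSeries_le_pow {n i : ℕ} (hi : i ≤ n) (hi0 : i ≠ 0) {R : ℝ≥0}
    {c : Freq → E} (hc : wienerNorm n c ≤ R) (ζ : ℂ) :
    ‖iteratedFDeriv ℝ i (trigSeries c) ζ‖ ≤ (2 * Real.pi * (1 + R)) ^ i := by
  have hci : wienerNorm i c ≤ R := (wienerNorm_mono hi c).trans hc
  have hle := ENNReal.toReal_mono (by finiteness)
    ((enorm_iteratedFDeriv_trigSeries_le i (ne_top_of_le_ne_top ENNReal.coe_ne_top hci) ζ).trans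
      (mul_le_mul_right hci _))
  rw [toReal_enorm, ENNReal.toReal_mul, ENNReal.toReal_pow,
    ENNReal.toReal_ofReal Real.two_pi_pos.le, ENNReal.coe_toReal] at hle
  have hpow : (1 + R : ℝ) ≤ (1 + R) ^ i := le_self_pow₀ (by simp) hi0
  rw [mul_pow]
  exact hle.trans (by gcongr; linarith)

theorem exists_norm_iteratedFDeriv_le_of_hasCompactSupport {E V : Type*} [NormedAddCommGroup E]
    [NormedSpace ℝ E] [NormedAddCommGroup V] [NormedSpace ℝ V] {Φ : E → V} {n : ℕ}
    (hΦ : ContDiff ℝ n Φ) (hsupp : HasCompactSupport Φ) :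
    ∃ K, ∀ i ≤ n, ∀ y, ‖iteratedFDeriv ℝ i Φ y‖ ≤ K := by
  have hbound (i : ℕ) (hi : i ≤ n) : ∃ K, ∀ y, ‖iteratedFDeriv ℝ i Φ y‖ ≤ K :=
    (hsupp.iteratedFDeriv i).exists_bound_of_continuous
      (hΦ.continuous_iteratedFDeriv (by exact_mod_cast hi))
  choose! K hK using hbound
  exact ⟨∑ i ∈ Finset.range (n + 1), |K i|, fun i hi y => (hK i hi y).trans <|
    (le_abs_self _).trans <| Finset.single_le_sum (f := fun i => |K i|)
      (fun _ _ => abs_nonneg _) (Finset.mem_range.2 (Nat.lt_succ_of_le hi))⟩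

theorem exists_wienerNorm_zero_comp_trigSeries_le {V : Type*} [NormedAddCommGroup V]
    [NormedSpace ℝ V] [NormedSpace ℂ V] [IsScalarTower ℝ ℂ V] [CompleteSpace V] {Φ : E → V}
    (hΦ : ContDiff ℝ 3 Φ) (hsupp : HasCompactSupport Φ) (R : ℝ≥0) :
    ∃ C : ℝ≥0, ∀ c : Freq → E, wienerNorm 3 c ≤ R →
      wienerNorm 0 (latticeCoeff fun ζ => Φ (trigSeries c ζ)) ≤ C := by
  obtain ⟨K, hK⟩ := exists_norm_iteratedFDeriv_le_of_hasCompactSupport (n := 3) hΦ hsupp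
  let B := max K (Nat.factorial 3 * K * (2 * Real.pi * (1 + R)) ^ 3)
  refine ⟨(B * (1 + ∑' k : Freq, ‖k‖ ^ (-3 : ℝ))).toNNReal, fun c hc => ?_⟩
  have hf : ContDiff ℝ 3 (trigSeries c) :=
    contDiff_trigSeries 3 (ne_top_of_le_ne_top ENNReal.coe_ne_top hc)
  refine wienerNorm_zero_latticeCoeff_le ((doublyPeriodic_trigSeries c).comp Φ) (hΦ.comp hf)
    (fun ζ => ?_) fun ζ => ?_
  · rw [← norm_iteratedFDeriv_zero (𝕜 := ℝ) (f := Φ)]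
    exact (hK 0 (Nat.zero_le 3) _).trans (le_max_left _ _)
  · exact (norm_iteratedFDeriv_comp_le hΦ hf le_rfl ζ (fun i hi => hK i hi _) fun i hi0 hi =>
      norm_iteratedFDeriv_trigSeries_le_pow hi (Nat.one_le_iff_ne_zero.1 hi0) hc ζ).trans
      (le_max_right _ _)

theorem wienerNorm_succ_comp_trigSeries_le {V : Type*} [NormedAddCommGroup V]
    [NormedSpace ℝ V] [NormedSpace ℂ V] [IsScalarTower ℝ ℂ V] [CompleteSpace V] {Φ : E → V}
    (hΦ : ContDiff ℝ 1 Φ) (s : ℕ) {c : Freq → E} (hc : wienerNorm (s + 1) c ≠ ⊤) :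
    wienerNorm (s + 1) (latticeCoeff fun ζ => Φ (trigSeries c ζ))
      ≤ ‖latticeCoeff (fun ζ => Φ (trigSeries c ζ)) 0‖ₑ
        + 2 * wienerNorm s (latticeCoeff fun ζ => postcompFDeriv Φ (trigSeries c ζ))
          * (ENNReal.ofReal (2 * Real.pi) * wienerNorm (s + 1) c) := by
  have hc1 : wienerNorm 1 c ≠ ⊤ := ne_top_of_le_ne_top hc (wienerNorm_mono (by omega) c)
  have hper := doublyPeriodic_trigSeries c
  have hcont : ContDiff ℝ 1 (trigSeries c) := contDiff_trigSeries 1 hc1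
  have hc' : wienerNorm s (fderivCoeff c) ≠ ⊤ :=
    ne_top_of_le_ne_top (by finiteness) (wienerNorm_fderivCoeff_le s c)
  have hchain : fderiv ℝ (fun ζ => Φ (trigSeries c ζ))
      = fun ζ => postcompFDeriv Φ (trigSeries c ζ) (trigSeries (fderivCoeff c) ζ) :=
    funext fun ζ => ((hΦ.differentiable one_ne_zero _).hasFDerivAt.comp ζ
      (hasFDerivAt_trigSeries hc1 ζ)).fderiv
  refine (wienerNorm_succ_latticeCoeff_le s (hper.comp Φ) (hΦ.comp hcont)).trans ?_
  rw [hchain]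
  gcongr
  refine (wienerNorm_latticeCoeff_clm_apply_le s (hper.comp (postcompFDeriv Φ)) ?_
    (ne_top_of_le_ne_top hc' (wienerNorm_mono (Nat.zero_le s) _))).trans ?_
  · exact (ContinuousLinearMap.compL ℝ ℂ E V).continuous.comp
      ((hΦ.continuous_fderiv one_ne_zero).comp hcont.continuous)
  · gcongr
    exact wienerNorm_fderivCoeff_le s c

end Composition

theorem exists_wienerNorm_comp_trigSeries_le.{u} {E V : Type u} [NormedAddCommGroup E]
    [NormedSpace ℝ E] [NormedSpace ℂ E] [IsScalarTower ℝ ℂ E] [CompleteSpace E]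
    [NormedAddCommGroup V] [NormedSpace ℝ V] [NormedSpace ℂ V] [IsScalarTower ℝ ℂ V]
    [CompleteSpace V] {Φ : E → V} {r s : ℕ} (hr : 3 ≤ r) (hs : s ≤ r)
    (hΦ : ContDiff ℝ (s + 3 : ℕ) Φ) (hsupp : HasCompactSupport Φ) (R : ℝ≥0) :
    ∃ C : ℝ≥0, ∀ c : Freq → E, wienerNorm r c ≤ R →
      wienerNorm s (latticeCoeff fun ζ => Φ (trigSeries c ζ)) ≤ C := by
  induction s generalizing V with
  | zero =>
    obtain ⟨C, hC⟩ := exists_wienerNorm_zero_comp_trigSeries_le hΦ hsupp R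
    exact ⟨C, fun c hc => hC c ((wienerNorm_mono hr c).trans hc)⟩
  | succ s ih =>
    obtain ⟨C, hC⟩ := ih ((Nat.le_succ s).trans hs) (contDiff_postcompFDeriv (n := s + 3)
      (hΦ.of_le (by norm_cast))) (hasCompactSupport_postcompFDeriv hsupp)
    obtain ⟨K, hK⟩ := hsupp.exists_bound_of_continuous hΦ.continuous
    refine ⟨K.toNNReal + 2 * C * ((2 * Real.pi).toNNReal * R), fun c hc => ?_⟩
    have hcs : wienerNorm (s + 1) c ≤ R := (wienerNorm_mono hs c).trans hc
    refine (wienerNorm_succ_comp_trigSeries_le (hΦ.of_le (by norm_cast; omega)) s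
      (ne_top_of_le_ne_top ENNReal.coe_ne_top hcs)).trans ?_
    push_cast
    gcongr
    · rw [← ofReal_norm]
      exact ENNReal.ofReal_le_ofReal
        (norm_latticeCoeff_le ((doublyPeriodic_trigSeries c).comp Φ) (fun _ => hK _) 0)
    · exact hC c hc
    · exact le_rfl

theorem exists_wienerNorm_comp_trigSeries_le_mul.{u} {E V : Type u} [NormedAddCommGroup E]
    [NormedSpace ℝ E] [NormedSpace ℂ E] [IsScalarTower ℝ ℂ E] [CompleteSpace E]
    [NormedAddCommGroup V] [NormedSpace ℝ V] [NormedSpace ℂ V] [IsScalarTower ℝ ℂ V]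
    [CompleteSpace V] {Φ : E → V} (hΦ0 : Φ 0 = 0) {r s : ℕ} (hr : 3 ≤ r) (hs : s < r)
    (hΦ : ContDiff ℝ (s + 4 : ℕ) Φ) (hsupp : HasCompactSupport Φ) (R : ℝ≥0) :
    ∃ C : ℝ≥0, ∀ c : Freq → E, wienerNorm r c ≤ R →
      wienerNorm (s + 1) (latticeCoeff fun ζ => Φ (trigSeries c ζ)) ≤ C * wienerNorm (s + 1) c := by
  obtain ⟨L, hL⟩ := hΦ.lipschitzWith_of_hasCompactSupport hsupp (by simp)
  obtain ⟨C, hC⟩ := exists_wienerNorm_comp_trigSeries_le (V := (ℂ →L[ℝ] E) →L[ℝ] ℂ →L[ℝ] V)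
    hr hs.le (contDiff_postcompFDeriv hΦ) (hasCompactSupport_postcompFDeriv hsupp) R
  refine ⟨L + 2 * C * (2 * Real.pi).toNNReal, fun c hc => ?_⟩
  have hcs : wienerNorm (s + 1) c ≤ R := (wienerNorm_mono hs c).trans hc
  have hcs_top : wienerNorm (s + 1) c ≠ ⊤ := ne_top_of_le_ne_top ENNReal.coe_ne_top hcs
  have hmean : ‖latticeCoeff (fun ζ => Φ (trigSeries c ζ)) 0‖ₑ ≤ L * wienerNorm (s + 1) c := by
    refine enorm_latticeCoeff_le_of_enorm_le ((doublyPeriodic_trigSeries c).comp Φ)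
      (ENNReal.mul_ne_top ENNReal.coe_ne_top hcs_top) (fun ζ => ?_) 0
    calc ‖Φ (trigSeries c ζ)‖ₑ ≤ L * ‖trigSeries c ζ‖ₑ := by
          simpa only [hΦ0, edist_zero_right] using hL (trigSeries c ζ) 0
      _ ≤ L * wienerNorm (s + 1) c := by
          gcongr
          exact (enorm_trigSeries_le c ζ).trans (wienerNorm_mono (Nat.zero_le _) c)
  calc wienerNorm (s + 1) (latticeCoeff fun ζ => Φ (trigSeries c ζ))
      ≤ _ := wienerNorm_succ_comp_trigSeries_le (hΦ.of_le (by norm_cast; omega)) s hcs_top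
    _ ≤ L * wienerNorm (s + 1) c
        + 2 * C * (ENNReal.ofReal (2 * Real.pi) * wienerNorm (s + 1) c) := by
      gcongr
      exact hC c hc
    _ = ↑(L + 2 * C * (2 * Real.pi).toNNReal) * wienerNorm (s + 1) c := by
      rw [ENNReal.ofReal]
      push_cast
      ring

section FixedPoint

variable {ι E : Type*} [NormedAddCommGroup E]

theorem enorm_sq_eq_tsum_of_lp_two (x : lp (fun _ : ι => E) 2) :
    ‖x‖ₑ ^ 2 = ∑' i, ‖x i‖ₑ ^ 2 := by
  have hsum : HasSum (fun i => ‖x i‖ ^ 2) (‖x‖ ^ 2) := by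
    simpa using lp.hasSum_norm (p := 2) (by simp) x
  simp only [enorm_sq_eq_ofReal_norm_sq]
  rw [← hsum.tsum_eq, ENNReal.ofReal_tsum_of_nonneg (fun _ => by positivity) hsum.summable]

theorem exists_fixedPoint_of_tsum_enorm_sq_le [CompleteSpace E] {S : Set (ι → E)}
    (hS : IsClosed S) (hne : S.Nonempty) (hmem : ∀ c ∈ S, Memℓp c 2) {T : (ι → E) → ι → E}
    (hT : Set.MapsTo T S S) {q : ℝ≥0} (hq : q < 1)
    (hle : ∀ c ∈ S, ∀ d ∈ S, ∑' i, ‖T c i - T d i‖ₑ ^ 2 ≤ q ^ 2 * ∑' i, ‖c i - d i‖ₑ ^ 2) :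
    ∃ c ∈ S, T c = c := by
  let S' : Set (lp (fun _ : ι => E) 2) := {x | ⇑x ∈ S}
  have hS' : IsClosed S' := hS.preimage lp.uniformContinuous_coe.continuous
  have := hS'.completeSpace_coe
  let T' (x : S') : S' := ⟨⟨T x, hmem _ (hT x.2)⟩, hT x.2⟩
  have hT' : ContractingWith q T' := by
    refine ⟨hq, fun x y => (ENNReal.pow_le_pow_left_iff two_ne_zero).1 ?_⟩
    rw [mul_pow, Subtype.edist_eq, Subtype.edist_eq, edist_eq_enorm_sub, edist_eq_enorm_sub,
      enorm_sq_eq_tsum_of_lp_two, enorm_sq_eq_tsum_of_lp_two]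
    exact hle _ x.2 _ y.2
  obtain ⟨c, hc⟩ := hne
  let x : S' := ⟨⟨c, hmem c hc⟩, hc⟩
  obtain ⟨y, hy, -⟩ := hT'.exists_fixedPoint x (edist_ne_top _ _)
  exact ⟨y, y.2, congrArg (fun z : S' => ⇑(z : lp (fun _ : ι => E) 2)) hy⟩

end FixedPoint

section SobolevNorm

variable {V : Type*} [NormedAddCommGroup V]

/-- The squared Sobolev norm `∑ₖ (weight(k)ˢ ‖cₖ‖)²` of a family of Fourier coefficients. -/
noncomputable def sobolevSq (s : ℕ) (c : Freq → V) : ℝ≥0∞ :=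
  ∑' k : Freq, ((k.weight : ℝ≥0∞) ^ s * ‖c k‖ₑ) ^ 2

theorem sobolevSq_zero (c : Freq → V) : sobolevSq 0 c = ∑' k, ‖c k‖ₑ ^ 2 := by
  simp only [sobolevSq, pow_zero, one_mul]

theorem sobolevSq_mono {s t : ℕ} (h : s ≤ t) (c : Freq → V) : sobolevSq s c ≤ sobolevSq t c :=
  ENNReal.tsum_le_tsum fun k => by
    gcongr
    exact_mod_cast k.one_le_weight

theorem sobolevSq_add_le (s : ℕ) (c d : Freq → V) :
    sobolevSq s (c + d) ≤ 2 * (sobolevSq s c + sobolevSq s d) := by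
  rw [sobolevSq, sobolevSq, sobolevSq, ← ENNReal.tsum_add, ← ENNReal.tsum_mul_left]
  refine ENNReal.tsum_le_tsum fun k => le_trans ?_ (ennreal_add_sq_le _ _)
  rw [← mul_add]
  gcongr
  exact enorm_add_le _ _

theorem sobolevSq_le_wienerNorm_sq (s : ℕ) (c : Freq → V) :
    sobolevSq s c ≤ wienerNorm s c ^ 2 := by
  rw [sobolevSq, sq, wienerNorm, ← ENNReal.tsum_mul_right]
  refine ENNReal.tsum_le_tsum fun k => ?_
  rw [sq]
  gcongr
  exact ENNReal.le_tsum k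

theorem memℓp_two_of_wienerNorm_ne_top {s : ℕ} {c : Freq → V} (hc : wienerNorm s c ≠ ⊤) :
    Memℓp c 2 := by
  have hsummable : Summable fun k => ‖c k‖ :=
    wienerNorm_zero_ne_top.1 (ne_top_of_le_ne_top hc (wienerNorm_mono s.zero_le c))
  exact Memℓp.of_exponent_ge (memℓp_gen (p := 1) (by simpa using hsummable)) one_le_two

theorem isClosed_wienerNorm_le (s : ℕ) (δ : ℝ≥0∞) :
    IsClosed {c : Freq → V | wienerNorm s c ≤ δ} := by
  refine LowerSemicontinuous.isClosed_preimage (lowerSemicontinuous_tsum fun k => ?_) δ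
  refine Continuous.lowerSemicontinuous ?_
  exact (ENNReal.continuous_const_mul (by finiteness)).comp (continuous_apply k).enorm

end SobolevNorm

section Localization

theorem exists_contDiff_hasCompactSupport_eventuallyEq {F V : Type*} [NormedAddCommGroup F]
    [NormedSpace ℝ F] [FiniteDimensional ℝ F] [NormedAddCommGroup V] [NormedSpace ℝ V]
    {g : F → V} {x : F} {n : ℕ} (hg : ContDiffAt ℝ n g x) :
    ∃ G : F → V, ContDiff ℝ n G ∧ HasCompactSupport G ∧ G =ᶠ[𝓝 x] g := by
  obtain ⟨r, hr, hball⟩ := Metric.eventually_nhds_iff_ball.1 (hg.eventually (by simp))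
  let φ : ContDiffBump x := ⟨r / 4, r / 2, by positivity, by linarith⟩
  refine ⟨fun y => φ y • g y, contDiff_iff_contDiffAt.2 fun y => ?_,
    φ.hasCompactSupport.smul_right, ?_⟩
  · by_cases hy : y ∈ tsupport φ
    · refine φ.contDiff.contDiffAt.smul (hball y ?_)
      rw [φ.tsupport_eq] at hy
      exact Metric.closedBall_subset_ball (half_lt_self hr) hy
    · refine (contDiffAt_const (c := (0 : V))).congr_of_eventuallyEq ?_
      filter_upwards [notMem_tsupport_iff_eventuallyEq.1 hy] with z hz
      rw [hz, Pi.zero_apply, zero_smul]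
  · filter_upwards [φ.eventuallyEq_one] with y hy
    rw [hy, Pi.one_apply, one_smul]

theorem log_latticeChar_eventuallyEq (k : Freq) :
    ∀ᶠ ζ in 𝓝 (0 : ℂ),
      (2 * Real.pi * Complex.I)⁻¹ * Complex.log (latticeChar k ζ) = freqCLM k ζ := by
  have hcont : ContinuousAt (fun ζ => |2 * Real.pi * freqCLM k ζ|) 0 := by fun_prop
  have hsmall : ∀ᶠ ζ in 𝓝 (0 : ℂ), |2 * Real.pi * freqCLM k ζ| < Real.pi :=
    hcont.eventually_lt_const (by simpa using Real.pi_pos)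
  filter_upwards [hsmall] with ζ hζ
  have him : (2 * Real.pi * Complex.I * freqCLM k ζ).im = 2 * Real.pi * freqCLM k ζ := by simp
  rw [abs_lt, ← him] at hζ
  rw [latticeChar_eq_exp, Complex.log_exp hζ.1 hζ.2.le,
    inv_mul_cancel_left₀ Complex.two_pi_I_ne_zero]

theorem exists_doublyPeriodic_contDiff_eventuallyEq_id (n : ℕ) :
    ∃ Z : ℂ → ℂ, DoublyPeriodic Z ∧ ContDiff ℝ n Z ∧ Z =ᶠ[𝓝 0] id := by
  have hlog : ContDiffAt ℝ n (fun w => (2 * Real.pi * Complex.I)⁻¹ * Complex.log w) 1 :=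
    contDiffAt_const.mul
      ((Complex.contDiffAt_log Complex.one_mem_slitPlane).restrict_scalars ℝ)
  obtain ⟨G, hG, -, hGlog⟩ := exists_contDiff_hasCompactSupport_eventuallyEq hlog
  have hcoord (k : Freq) : ∀ᶠ ζ in 𝓝 (0 : ℂ), G (latticeChar k ζ) = freqCLM k ζ := by
    have htendsto : Tendsto (latticeChar k) (𝓝 0) (𝓝 1) := by
      simpa [latticeChar_eq_exp] using (contDiff_latticeChar k (n := 0)).continuous.tendsto 0
    filter_upwards [htendsto.eventually hGlog, log_latticeChar_eventuallyEq k] with ζ h₁ h₂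
    rw [h₁, h₂]
  refine ⟨fun ζ => G (latticeChar ![1, 0] ζ) + Complex.I * G (latticeChar ![0, 1] ζ), ?_, ?_, ?_⟩
  · exact ((doublyPeriodic_latticeChar _).comp G).map₂
      ((doublyPeriodic_latticeChar _).comp G) (· + Complex.I * ·)
  · exact (hG.comp (contDiff_latticeChar _)).add
      (contDiff_const.mul (hG.comp (contDiff_latticeChar _)))
  · filter_upwards [hcoord ![1, 0], hcoord ![0, 1]] with ζ h₁ h₂
    rw [h₁, h₂, freqCLM_apply, freqCLM_apply]
    apply Complex.ext <;> simp

end Localization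

section CauchyRiemann

variable {V : Type*} [NormedAddCommGroup V] [NormedSpace ℂ V]

/-- The Cauchy–Riemann operator `∂ₓ + i ∂ᵧ`, twice the Wirtinger derivative `∂/∂ζ̄`. -/
noncomputable def dbar [NormedSpace ℝ V] (F : ℂ → V) (ζ : ℂ) : V :=
  fderiv ℝ F ζ 1 + Complex.I • fderiv ℝ F ζ Complex.I

theorem dbar_add [NormedSpace ℝ V] {F G : ℂ → V} {ζ : ℂ} (hF : DifferentiableAt ℝ F ζ)
    (hG : DifferentiableAt ℝ G ζ) : dbar (F + G) ζ = dbar F ζ + dbar G ζ := by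
  simp only [dbar, fderiv_add hF hG, add_apply, smul_add]
  abel

/-- The Fourier multiplier inverting `dbar` on series without constant term. The frequency `0`
causes no case distinction, because `0⁻¹ = 0`. -/
noncomputable def dbarInv (c : Freq → V) (k : Freq) : V :=
  (2 * Real.pi * Complex.I * ((k 0 : ℂ) + k 1 * Complex.I))⁻¹ • c k

/-- Adding to `dbarInv c` a multiple of `c 0` turns it into an inverse of `dbar` near any point at
which `x` is the family of Fourier coefficients of a function that agrees with `Re ζ`. -/
noncomputable def dbarSolve (x : Freq → ℂ) (c : Freq → V) (k : Freq) : V :=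
  x k • c 0 + dbarInv c k

theorem weight_mul_enorm_dbarInv_le (c : Freq → V) (k : Freq) :
    (k.weight : ℝ≥0∞) * ‖dbarInv c k‖ₑ ≤ ‖c k‖ₑ := by
  by_cases hk : k = 0
  · simp [dbarInv, hk]
  set K : ℂ := (k 0 : ℂ) + k 1 * Complex.I
  have hle : ‖freqCLM k‖ ≤ ‖K‖ := by
    refine ContinuousLinearMap.opNorm_le_bound _ (norm_nonneg _) fun w => ?_
    have hre : freqCLM k w = (starRingEnd ℂ K * w).re := by simp [K, freqCLM_apply]
    rw [hre, ← Complex.norm_conj K, ← norm_mul]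
    exact Complex.abs_re_le_norm _
  have hweight : (k.weight : ℝ) ≤ 3 * ‖K‖ :=
    (weight_le_three_mul_norm_freqCLM hk).trans (by gcongr)
  have hone : (1 : ℝ) ≤ k.weight := by exact_mod_cast k.one_le_weight
  have hK : 0 < ‖K‖ := by linarith
  have hnorm : ‖dbarInv c k‖ = (2 * Real.pi * ‖K‖)⁻¹ * ‖c k‖ := by
    rw [dbarInv, norm_smul, norm_inv]
    simp [K, abs_of_pos Real.pi_pos]
  rw [← ofReal_norm, ← ofReal_norm, ← ENNReal.ofReal_natCast,
    ← ENNReal.ofReal_mul (by positivity), hnorm, ← mul_assoc]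
  refine ENNReal.ofReal_le_ofReal (mul_le_of_le_one_left (norm_nonneg _) ?_)
  rw [← div_eq_mul_inv, div_le_one (by positivity)]
  nlinarith [Real.pi_gt_three]

theorem wienerNorm_dbarInv_le (s : ℕ) (c : Freq → V) :
    wienerNorm (s + 1) (dbarInv c) ≤ wienerNorm s c :=
  ENNReal.tsum_le_tsum fun k => by
    rw [pow_succ, mul_assoc]
    gcongr
    exact weight_mul_enorm_dbarInv_le c k

theorem sobolevSq_dbarInv_le (s : ℕ) (c : Freq → V) :
    sobolevSq (s + 1) (dbarInv c) ≤ sobolevSq s c :=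
  ENNReal.tsum_le_tsum fun k => by
    rw [pow_succ _ s, mul_assoc]
    gcongr
    exact weight_mul_enorm_dbarInv_le c k

theorem wienerNorm_smul_const (s : ℕ) (a : Freq → ℂ) (v : V) :
    wienerNorm s (fun k => a k • v) = wienerNorm s a * ‖v‖ₑ := by
  simp only [wienerNorm, enorm_smul, ← ENNReal.tsum_mul_right, mul_assoc]

theorem sobolevSq_smul_const (s : ℕ) (a : Freq → ℂ) (v : V) :
    sobolevSq s (fun k => a k • v) = sobolevSq s a * ‖v‖ₑ ^ 2 := by
  simp only [sobolevSq, enorm_smul, ← ENNReal.tsum_mul_right, ← mul_assoc, mul_pow]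

theorem wienerNorm_dbarSolve_le (s : ℕ) (x : Freq → ℂ) (c : Freq → V) :
    wienerNorm (s + 1) (dbarSolve x c) ≤ (wienerNorm (s + 1) x + 1) * wienerNorm s c := by
  calc wienerNorm (s + 1) (dbarSolve x c)
      ≤ wienerNorm (s + 1) (fun k => x k • c 0) + wienerNorm (s + 1) (dbarInv c) :=
        wienerNorm_add_le _ _ _
    _ ≤ wienerNorm (s + 1) x * wienerNorm s c + wienerNorm s c := by
        rw [wienerNorm_smul_const]
        gcongr
        · exact enorm_le_wienerNorm s c 0
        · exact wienerNorm_dbarInv_le s c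
    _ = _ := by ring

theorem sobolevSq_dbarSolve_le (s : ℕ) (x : Freq → ℂ) (c : Freq → V) :
    sobolevSq (s + 1) (dbarSolve x c) ≤ 2 * (sobolevSq (s + 1) x + 1) * sobolevSq s c := by
  have hc0 : ‖c 0‖ₑ ^ 2 ≤ sobolevSq s c := by
    simpa [sobolevSq, Freq.weight] using
      ENNReal.le_tsum (f := fun k : Freq => ((k.weight : ℝ≥0∞) ^ s * ‖c k‖ₑ) ^ 2) 0
  calc sobolevSq (s + 1) (dbarSolve x c)
      ≤ 2 * (sobolevSq (s + 1) (fun k => x k • c 0) + sobolevSq (s + 1) (dbarInv c)) :=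
        sobolevSq_add_le _ _ _
    _ ≤ 2 * (sobolevSq (s + 1) x * sobolevSq s c + sobolevSq s c) := by
        rw [sobolevSq_smul_const]
        gcongr
        exact sobolevSq_dbarInv_le s c
    _ = _ := by ring

theorem dbarSolve_sub (x : Freq → ℂ) (c d : Freq → V) :
    dbarSolve x (c - d) = dbarSolve x c - dbarSolve x d := by
  funext k
  simp only [dbarSolve, dbarInv, Pi.sub_apply, smul_sub]
  abel

theorem fderivCoeff_dbarInv [NormedSpace ℝ V] [IsScalarTower ℝ ℂ V] (c : Freq → V) (k : Freq) :
    fderivCoeff (dbarInv c) k 1 + Complex.I • fderivCoeff (dbarInv c) k Complex.I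
      = c k - if k = 0 then c 0 else 0 := by
  have hsmul (r : ℝ) (v : V) : r • v = (r : ℂ) • v := (algebraMap_smul ℂ r v).symm
  set κ : ℂ := 2 * Real.pi * Complex.I * ((k 0 : ℂ) + k 1 * Complex.I)
  have hsymbol : fderivCoeff (dbarInv c) k 1 + Complex.I • fderivCoeff (dbarInv c) k Complex.I
      = (κ * κ⁻¹) • c k := by
    simp only [fderivCoeff, dbarInv, ContinuousLinearMap.smulRight_apply, freqCLM_apply, hsmul,
      smul_smul, ← add_smul]
    congr 1
    simp only [κ, Complex.one_re, Complex.one_im, Complex.I_re, Complex.I_im]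
    push_cast
    ring
  split_ifs with hk
  · rw [hsymbol, hk]
    simp [κ, hk]
  · have hκ : κ ≠ 0 := by
      refine mul_ne_zero Complex.two_pi_I_ne_zero fun h => hk ?_
      have h0 := congrArg Complex.re h
      have h1 := congrArg Complex.im h
      simp only [Complex.add_re, Complex.add_im, Complex.mul_re, Complex.mul_im, Complex.intCast_re,
        Complex.intCast_im, Complex.I_re, Complex.I_im, Complex.zero_re, Complex.zero_im] at h0 h1
      ext i
      fin_cases i
      · simpa using h0
      · simpa using h1
    rw [hsymbol, mul_inv_cancel₀ hκ, one_smul, sub_zero]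

theorem trigSeries_clm_comp [CompleteSpace V] {W : Type*} [NormedAddCommGroup W]
    [NormedSpace ℂ W] (L : V →L[ℂ] W) {c : Freq → V} (hc : wienerNorm 0 c ≠ ⊤) (ζ : ℂ) :
    trigSeries (fun k => L (c k)) ζ = L (trigSeries c ζ) := by
  simpa only [trigSeries, map_smul] using ((hasSum_trigSeries hc ζ).mapL L).tsum_eq

theorem trigSeries_smul_const {a : Freq → ℂ} (ha : wienerNorm 0 a ≠ ⊤) (v : V) :
    trigSeries (fun k => a k • v) = fun ζ => trigSeries a ζ • v :=
  funext (trigSeries_clm_comp ((ContinuousLinearMap.id ℂ ℂ).smulRight v) ha)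

variable [CompleteSpace V]

theorem trigSeries_add {c d : Freq → V} (hc : wienerNorm 0 c ≠ ⊤) (hd : wienerNorm 0 d ≠ ⊤) :
    trigSeries (c + d) = trigSeries c + trigSeries d :=
  funext fun ζ => by
    simpa only [trigSeries, Pi.add_apply, smul_add] using
      ((hasSum_trigSeries hc ζ).add (hasSum_trigSeries hd ζ)).tsum_eq

theorem trigSeries_dbarSolve {x : Freq → ℂ} (hx : wienerNorm 0 x ≠ ⊤) {c : Freq → V}
    (hc : wienerNorm 0 c ≠ ⊤) :
    trigSeries (dbarSolve x c) = (fun ζ => trigSeries x ζ • c 0) + trigSeries (dbarInv c) := by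
  have hd : wienerNorm 0 (dbarInv c) ≠ ⊤ := ne_top_of_le_ne_top hc
    ((wienerNorm_mono zero_le_one _).trans (wienerNorm_dbarInv_le 0 c))
  have hx' : wienerNorm 0 (fun k => x k • c 0) ≠ ⊤ := by
    rw [wienerNorm_smul_const]
    finiteness
  rw [← trigSeries_smul_const hx, ← trigSeries_add hx' hd]
  rfl

variable [NormedSpace ℝ V] [IsScalarTower ℝ ℂ V]

theorem fderiv_trigSeries_apply {c : Freq → V} (hc : wienerNorm 1 c ≠ ⊤) (ζ w : ℂ) :
    fderiv ℝ (trigSeries c) ζ w = trigSeries (fun k => fderivCoeff c k w) ζ := by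
  have hc' : wienerNorm 0 (fderivCoeff c) ≠ ⊤ :=
    ne_top_of_le_ne_top (ENNReal.mul_ne_top ENNReal.ofReal_ne_top hc)
      (wienerNorm_fderivCoeff_le 0 c)
  rw [fderiv_trigSeries hc]
  exact (trigSeries_clm_comp (evalCLM w) hc' ζ).symm

theorem dbar_trigSeries_dbarInv {c : Freq → V} (hc : wienerNorm 0 c ≠ ⊤) (ζ : ℂ) :
    dbar (trigSeries (dbarInv c)) ζ = trigSeries c ζ - c 0 := by
  have hd := ne_top_of_le_ne_top hc (wienerNorm_dbarInv_le 0 c)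
  have hd' : wienerNorm 0 (fderivCoeff (dbarInv c)) ≠ ⊤ :=
    ne_top_of_le_ne_top (ENNReal.mul_ne_top ENNReal.ofReal_ne_top hd)
      (wienerNorm_fderivCoeff_le 0 _)
  have hsum := (hasSum_trigSeries hd' ζ).mapL
    (evalCLM 1 + Complex.I • evalCLM Complex.I : (ℂ →L[ℝ] V) →L[ℂ] V)
  rw [dbar, fderiv_trigSeries hd]
  refine hsum.unique ?_
  convert (hasSum_trigSeries hc ζ).sub (hasSum_ite_eq (0 : Freq) (c 0)) using 2 with k
  rw [map_smul]
  refine (congrArg (latticeChar k ζ • ·) (fderivCoeff_dbarInv c k)).trans ?_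
  split_ifs with hk
  · rw [smul_sub, hk, latticeChar_zero, one_smul]
  · rw [sub_zero, sub_zero]

theorem dbar_trigSeries_dbarSolve {x : Freq → ℂ} (hx : wienerNorm 1 x ≠ ⊤) {c : Freq → V}
    (hc : wienerNorm 0 c ≠ ⊤) {ζ : ℂ} (hre : trigSeries x =ᶠ[𝓝 ζ] fun ζ => (ζ.re : ℂ)) :
    dbar (trigSeries (dbarSolve x c)) ζ = trigSeries c ζ := by
  have hx0 := ne_top_of_le_ne_top hx (wienerNorm_mono zero_le_one x)
  have hd := ne_top_of_le_ne_top hc (wienerNorm_dbarInv_le 0 c)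
  have hderiv : HasFDerivAt (fun ζ => trigSeries x ζ • c 0)
      ((Complex.ofRealCLM.comp Complex.reCLM).smulRight (c 0)) ζ :=
    ((Complex.ofRealCLM.comp Complex.reCLM).hasFDerivAt.congr_of_eventuallyEq hre).smul_const _
  rw [trigSeries_dbarSolve hx0 hc,
    dbar_add hderiv.differentiableAt (hasFDerivAt_trigSeries hd ζ).differentiableAt,
    dbar_trigSeries_dbarInv hc, dbar, hderiv.fderiv]
  simp

end CauchyRiemann

section Nonlinearity

variable {E : Type*} [NormedAddCommGroup E] [NormedSpace ℝ E]

theorem wienerNorm_smul (s : ℕ) (t : ℝ) (b : Freq → E) :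
    wienerNorm s (t • b) = ‖t‖ₑ * wienerNorm s b := by
  simp only [wienerNorm, Pi.smul_apply, enorm_smul, ← ENNReal.tsum_mul_left, mul_left_comm]

theorem enorm_lipschitz_apply_sub_le {X Y Z : Type*} [NormedAddCommGroup X] [NormedAddCommGroup Y]
    [NormedSpace ℝ Y] [NormedAddCommGroup Z] [NormedSpace ℝ Z] {M : X → Y →L[ℝ] Z} {L : ℝ≥0}
    (hM : LipschitzWith L M) (hM0 : M 0 = 0) (x x' : X) (y y' : Y) :
    ‖M x y - M x' y'‖ₑ ≤ L * (‖x‖ₑ * ‖y - y'‖ₑ + ‖x - x'‖ₑ * ‖y'‖ₑ) := by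
  have hx : ‖M x‖ₑ ≤ L * ‖x‖ₑ := by simpa [hM0, edist_eq_enorm_sub] using hM x 0
  have hxx' : ‖M x - M x'‖ₑ ≤ L * ‖x - x'‖ₑ := by simpa only [edist_eq_enorm_sub] using hM x x'
  calc ‖M x y - M x' y'‖ₑ = ‖M x (y - y') + (M x - M x') y'‖ₑ := by
        rw [map_sub, sub_apply, sub_add_sub_cancel]
    _ ≤ ‖M x‖ₑ * ‖y - y'‖ₑ + ‖M x - M x'‖ₑ * ‖y'‖ₑ :=
        (enorm_add_le _ _).trans (add_le_add ((M x).le_opENorm _) ((M x - M x').le_opENorm _))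
    _ ≤ L * ‖x‖ₑ * ‖y - y'‖ₑ + L * ‖x - x'‖ₑ * ‖y'‖ₑ := by gcongr
    _ = _ := by ring

variable [NormedSpace ℂ E]

/-- The nonlinearity `M(t f) ∂ᵧf` of the rescaled disc equation `∂ₓf + i ∂ᵧf = M(t f) ∂ᵧf`, where
`f` is the trigonometric series with coefficients `b`. -/
noncomputable def discNonlin (M : E → E →L[ℝ] E) (t : ℝ) (b : Freq → E) (ζ : ℂ) : E :=
  M (t • trigSeries b ζ) (fderiv ℝ (trigSeries b) ζ Complex.I)

theorem wienerNorm_fderivCoeff_apply_le (s : ℕ) (b : Freq → E) (w : ℂ) :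
    wienerNorm s (fun k => fderivCoeff b k w)
      ≤ ENNReal.ofReal (2 * Real.pi) * wienerNorm (s + 1) b * ‖w‖ₑ := by
  refine le_trans ?_ (mul_le_mul_left (wienerNorm_fderivCoeff_le s b) _)
  rw [wienerNorm, wienerNorm, ← ENNReal.tsum_mul_right]
  refine ENNReal.tsum_le_tsum fun k => ?_
  rw [mul_assoc]
  gcongr
  exact (fderivCoeff b k).le_opENorm w

theorem doublyPeriodic_discNonlin (M : E → E →L[ℝ] E) (t : ℝ) (b : Freq → E) :
    DoublyPeriodic (discNonlin M t b) :=
  ((doublyPeriodic_trigSeries b).comp fun y => M (t • y)).map₂ (doublyPeriodic_trigSeries b).fderiv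
    fun A L => A (L Complex.I)

variable [IsScalarTower ℝ ℂ E]

theorem trigSeries_smul (t : ℝ) (b : Freq → E) (ζ : ℂ) :
    trigSeries (t • b) ζ = t • trigSeries b ζ := by
  rw [trigSeries, trigSeries, ← tsum_const_smul'']
  exact tsum_congr fun k => smul_comm _ _ _

theorem tsum_enorm_sq_latticeCoeff_fderiv_le {F : ℂ → E} (hF : DoublyPeriodic F)
    (hd : ContDiff ℝ 1 F) (w : ℂ) :
    ∑' k, ‖latticeCoeff (fun ζ => fderiv ℝ F ζ w) k‖ₑ ^ 2
      ≤ (ENNReal.ofReal (2 * Real.pi) * ‖w‖ₑ) ^ 2 * sobolevSq 1 (latticeCoeff F) := by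
  rw [sobolevSq, ← ENNReal.tsum_mul_left]
  refine ENNReal.tsum_le_tsum fun k => ?_
  have hsymbol : ‖freqCLM k w‖ₑ ≤ k.weight * ‖w‖ₑ :=
    ((freqCLM k).le_opENorm w).trans (by
      gcongr
      rw [← ofReal_norm, ← ENNReal.ofReal_natCast]
      exact ENNReal.ofReal_le_ofReal (norm_freqCLM_le k))
  have hmult : ‖(2 * Real.pi * Complex.I * freqCLM k w : ℂ)‖ₑ
      = ENNReal.ofReal (2 * Real.pi) * ‖freqCLM k w‖ₑ := by
    simp only [← ofReal_norm, norm_mul, Complex.norm_real, Complex.norm_I, mul_one]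
    rw [← ENNReal.ofReal_mul (by positivity)]
    simp [abs_of_pos Real.pi_pos]
  rw [latticeCoeff_fderiv hF hd, enorm_smul, hmult, ← mul_pow]
  refine pow_le_pow_left' ?_ 2
  calc _ ≤ ENNReal.ofReal (2 * Real.pi) * (k.weight * ‖w‖ₑ) * ‖latticeCoeff F k‖ₑ := by gcongr
    _ = _ := by ring

variable [CompleteSpace E]

theorem continuous_discNonlin {M : E → E →L[ℝ] E} (hM : Continuous M) (t : ℝ) {b : Freq → E}
    (hb : wienerNorm 1 b ≠ ⊤) :
    Continuous (discNonlin M t b) := by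
  have hf := contDiff_trigSeries 1 hb
  exact (hM.comp (hf.continuous.const_smul t)).clm_apply
    ((hf.continuous_fderiv (by simp)).clm_apply continuous_const)

theorem exists_wienerNorm_discNonlin_le {M : E → E →L[ℝ] E} (hM0 : M 0 = 0)
    (hM : ContDiff ℝ (5 : ℕ) M) (hsupp : HasCompactSupport M) (R : ℝ≥0) :
    ∃ C : ℝ≥0, ∀ t : ℝ, ‖t‖ₑ ≤ 1 → ∀ b : Freq → E, wienerNorm 3 b ≤ R →
      wienerNorm 2 (latticeCoeff (discNonlin M t b)) ≤ C * ‖t‖ₑ := by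
  obtain ⟨C, hC⟩ := exists_wienerNorm_comp_trigSeries_le_mul (r := 3) (s := 1) hM0 le_rfl
    (by norm_num) hM hsupp R
  refine ⟨2 * (C * R) * ((2 * Real.pi).toNNReal * R), fun t ht b hb => ?_⟩
  have hb2 : wienerNorm 2 b ≤ R := (wienerNorm_mono (by norm_num) b).trans hb
  have hb1 : wienerNorm 1 b ≠ ⊤ :=
    ne_top_of_le_ne_top ENNReal.coe_ne_top ((wienerNorm_mono (by norm_num) b).trans hb)
  have hcoeff : wienerNorm 2 (latticeCoeff fun ζ => M (t • trigSeries b ζ)) ≤ C * (‖t‖ₑ * R) := by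
    simp only [← trigSeries_smul]
    refine (hC (t • b) ?_).trans ?_ <;> rw [wienerNorm_smul]
    · exact (mul_le_of_le_one_left' ht).trans hb
    · gcongr
  have hderiv (s : ℕ) : wienerNorm s (fun k => fderivCoeff b k Complex.I)
      ≤ ENNReal.ofReal (2 * Real.pi) * wienerNorm (s + 1) b := by
    simpa [← ofReal_norm] using wienerNorm_fderivCoeff_apply_le s b Complex.I
  unfold discNonlin
  simp only [fderiv_trigSeries_apply hb1]
  calc _ ≤ 2 * wienerNorm 2 (latticeCoeff fun ζ => M (t • trigSeries b ζ))
        * wienerNorm 2 (fun k => fderivCoeff b k Complex.I) :=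
        wienerNorm_latticeCoeff_clm_apply_le 2
          ((doublyPeriodic_trigSeries b).comp fun y => M (t • y))
          (hM.continuous.comp ((contDiff_trigSeries 1 hb1).continuous.const_smul t))
          (ne_top_of_le_ne_top (ENNReal.mul_ne_top ENNReal.ofReal_ne_top hb1) (hderiv 0))
    _ ≤ 2 * (C * (‖t‖ₑ * R)) * (ENNReal.ofReal (2 * Real.pi) * R) := by
        gcongr
        exact (hderiv 2).trans (by gcongr)
    _ = _ := by
        rw [ENNReal.ofReal]
        push_cast
        ring

theorem enorm_discNonlin_sub_le {M : E → E →L[ℝ] E} {L : ℝ≥0} (hM : LipschitzWith L M)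
    (hM0 : M 0 = 0) {R : ℝ≥0} (t : ℝ) {b d : Freq → E} (hb : wienerNorm 1 b ≤ R)
    (hd : wienerNorm 1 d ≤ R) (ζ : ℂ) :
    ‖discNonlin M t b ζ - discNonlin M t d ζ‖ₑ
      ≤ L * ‖t‖ₑ * (1 + ENNReal.ofReal (2 * Real.pi)) * R
        * (‖(trigSeries b - trigSeries d) ζ‖ₑ
          + ‖fderiv ℝ (trigSeries b - trigSeries d) ζ Complex.I‖ₑ) := by
  have hb1 := ne_top_of_le_ne_top ENNReal.coe_ne_top hb
  have hd1 := ne_top_of_le_ne_top ENNReal.coe_ne_top hd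
  have hf : ‖trigSeries b ζ‖ₑ ≤ R :=
    (enorm_trigSeries_le b ζ).trans ((wienerNorm_mono zero_le_one b).trans hb)
  have hg : ‖fderiv ℝ (trigSeries d) ζ Complex.I‖ₑ ≤ ENNReal.ofReal (2 * Real.pi) * R := by
    rw [fderiv_trigSeries_apply hd1]
    refine (enorm_trigSeries_le _ ζ).trans ((wienerNorm_fderivCoeff_apply_le 0 d _).trans ?_)
    simp only [← ofReal_norm, Complex.norm_I, ENNReal.ofReal_one, mul_one]
    gcongr
  rw [fderiv_sub (hasFDerivAt_trigSeries hb1 ζ).differentiableAt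
    (hasFDerivAt_trigSeries hd1 ζ).differentiableAt, sub_apply, Pi.sub_apply]
  set Δ := trigSeries b ζ - trigSeries d ζ
  set Δ' := fderiv ℝ (trigSeries b) ζ Complex.I - fderiv ℝ (trigSeries d) ζ Complex.I
  calc _ ≤ L * (‖t • trigSeries b ζ‖ₑ * ‖Δ'‖ₑ
        + ‖t • trigSeries b ζ - t • trigSeries d ζ‖ₑ
          * ‖fderiv ℝ (trigSeries d) ζ Complex.I‖ₑ) :=
        enorm_lipschitz_apply_sub_le hM hM0 _ _ _ _
    _ ≤ L * (‖t‖ₑ * R * ‖Δ'‖ₑ + ‖t‖ₑ * ‖Δ‖ₑ * (ENNReal.ofReal (2 * Real.pi) * R)) := by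
        rw [← smul_sub, enorm_smul, enorm_smul]
        gcongr
    _ ≤ L * (‖t‖ₑ * R * ‖Δ'‖ₑ + ‖t‖ₑ * ‖Δ‖ₑ * (ENNReal.ofReal (2 * Real.pi) * R))
        + L * (‖t‖ₑ * R * ‖Δ‖ₑ + ‖t‖ₑ * ‖Δ'‖ₑ * (ENNReal.ofReal (2 * Real.pi) * R)) :=
        le_self_add
    _ = _ := by ring

end Nonlinearity

theorem exists_tsum_enorm_sq_discNonlin_sub_le {E : Type*} [NormedAddCommGroup E]
    [InnerProductSpace ℂ E] [FiniteDimensional ℂ E] [NormedSpace ℝ E] [IsScalarTower ℝ ℂ E]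
    {M : E → E →L[ℝ] E} {L : ℝ≥0} (hM : LipschitzWith L M) (hM0 : M 0 = 0) (R : ℝ≥0) :
    ∃ C : ℝ≥0, ∀ (t : ℝ) (b d : Freq → E), wienerNorm 1 b ≤ R → wienerNorm 1 d ≤ R →
      ∑' k, ‖latticeCoeff (discNonlin M t b) k - latticeCoeff (discNonlin M t d) k‖ₑ ^ 2
        ≤ C * ‖t‖ₑ ^ 2 * sobolevSq 1 (b - d) := by
  have := FiniteDimensional.complete ℂ E
  let τ : ℝ≥0 := (2 * Real.pi).toNNReal
  refine ⟨2 * (L * (1 + τ) * R) ^ 2 * (1 + τ ^ 2), fun t b d hb hd => ?_⟩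
  have hb1 := ne_top_of_le_ne_top ENNReal.coe_ne_top hb
  have hd1 := ne_top_of_le_ne_top ENNReal.coe_ne_top hd
  have hb0 := ne_top_of_le_ne_top hb1 (wienerNorm_mono zero_le_one b)
  have hd0 := ne_top_of_le_ne_top hd1 (wienerNorm_mono zero_le_one d)
  have hNb := continuous_discNonlin hM.continuous t hb1
  have hNd := continuous_discNonlin hM.continuous t hd1
  have hG : DoublyPeriodic (trigSeries b - trigSeries d) :=
    (doublyPeriodic_trigSeries b).map₂ (doublyPeriodic_trigSeries d) (· - ·)
  have hGd : ContDiff ℝ 1 (trigSeries b - trigSeries d) :=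
    (contDiff_trigSeries 1 hb1).sub (contDiff_trigSeries 1 hd1)
  have hGcoeff := latticeCoeff_trigSeries_sub hb0 hd0
  have hmap := tsum_enorm_sq_latticeCoeff_le
    ((doublyPeriodic_discNonlin M t b).map₂ (doublyPeriodic_discNonlin M t d) (· - ·))
    (hNb.sub hNd) hG hGd.continuous (hG.fderiv.comp (· Complex.I))
    ((hGd.continuous_fderiv (by simp)).clm_apply continuous_const)
    (enorm_discNonlin_sub_le hM hM0 t hb hd)
  simp only [latticeCoeff_sub (doublyPeriodic_discNonlin M t b) (doublyPeriodic_discNonlin M t d)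
    hNb hNd] at hmap
  have hderiv := tsum_enorm_sq_latticeCoeff_fderiv_le hG hGd Complex.I
  simp only [← ofReal_norm Complex.I, Complex.norm_I, ENNReal.ofReal_one, mul_one] at hderiv
  have hG0 := sobolevSq_mono zero_le_one (b - d)
  rw [sobolevSq_zero] at hG0
  rw [hGcoeff] at hmap hderiv
  calc _ ≤ _ := hmap
    _ ≤ 2 * (L * ‖t‖ₑ * (1 + τ) * R) ^ 2 * (sobolevSq 1 (b - d) + τ ^ 2 * sobolevSq 1 (b - d)) := by
        gcongr
        exacts [le_rfl, hderiv]
    _ = _ := by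
        push_cast
        ring

section DiscEquation

section

variable {E : Type*} [NormedAddCommGroup E] [NormedSpace ℂ E]

/-- The Fourier coefficients of the disc with right-hand side `c` in the disc equation: a linear
disc in the direction `v`, given by the coefficients `a` of a function that agrees with `ζ` near
the origin, corrected by a solution of `dbar f = trigSeries c`. -/
noncomputable def discCoeff (a x : Freq → ℂ) (v : E) (c : Freq → E) : Freq → E :=
  (fun k => a k • v) + dbarSolve x c

theorem wienerNorm_discCoeff_le (s : ℕ) (a x : Freq → ℂ) (v : E) (c : Freq → E) :
    wienerNorm (s + 1) (discCoeff a x v c)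
      ≤ wienerNorm (s + 1) a * ‖v‖ₑ + (wienerNorm (s + 1) x + 1) * wienerNorm s c :=
  (wienerNorm_add_le _ _ _).trans (add_le_add (wienerNorm_smul_const _ _ _).le
    (wienerNorm_dbarSolve_le _ _ _))

theorem sobolevSq_discCoeff_sub_le (s : ℕ) (a x : Freq → ℂ) (v : E) (c d : Freq → E) :
    sobolevSq (s + 1) (discCoeff a x v c - discCoeff a x v d)
      ≤ 2 * (sobolevSq (s + 1) x + 1) * sobolevSq s (c - d) := by
  rw [discCoeff, discCoeff, add_sub_add_left_eq_sub, ← dbarSolve_sub]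
  exact sobolevSq_dbarSolve_le s x (c - d)

theorem exists_wienerNorm_discCoeff_le {s : ℕ} {a x : Freq → ℂ} (ha : wienerNorm (s + 1) a ≠ ⊤)
    (hx : wienerNorm (s + 1) x ≠ ⊤) (v : E) :
    ∃ R : ℝ≥0, ∀ c : Freq → E, wienerNorm s c ≤ 1 →
      wienerNorm (s + 1) (discCoeff a x v c) ≤ R := by
  lift wienerNorm (s + 1) a * ‖v‖ₑ + (wienerNorm (s + 1) x + 1) to ℝ≥0 using by finiteness
    with R hR
  refine ⟨R, fun c hc => (wienerNorm_discCoeff_le s a x v c).trans ?_⟩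
  rw [hR]
  gcongr
  exact mul_le_of_le_one_right' hc

/-- The map whose fixed points `c` are the right-hand sides of solutions of the disc equation. -/
noncomputable def discMap [NormedSpace ℝ E] (M : E → E →L[ℝ] E) (a x : Freq → ℂ) (v : E) (t : ℝ)
    (c : Freq → E) : Freq → E :=
  latticeCoeff (discNonlin M t (discCoeff a x v c))

end

variable {E : Type*} [NormedAddCommGroup E] [InnerProductSpace ℂ E] [FiniteDimensional ℂ E]
  [NormedSpace ℝ E] [IsScalarTower ℝ ℂ E] {M : E → E →L[ℝ] E} {a x : Freq → ℂ}

theorem exists_wienerNorm_discMap_le (hM0 : M 0 = 0) (hM : ContDiff ℝ (5 : ℕ) M)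
    (hsupp : HasCompactSupport M) (ha : wienerNorm 3 a ≠ ⊤) (hx : wienerNorm 3 x ≠ ⊤) (v : E) :
    ∃ C : ℝ≥0, ∀ t : ℝ, ‖t‖ₑ ≤ 1 → ∀ c : Freq → E, wienerNorm 2 c ≤ 1 →
      wienerNorm 2 (discMap M a x v t c) ≤ C * ‖t‖ₑ := by
  have := FiniteDimensional.complete ℂ E
  obtain ⟨R, hR⟩ := exists_wienerNorm_discCoeff_le ha hx v
  obtain ⟨C, hC⟩ := exists_wienerNorm_discNonlin_le hM0 hM hsupp R
  exact ⟨C, fun t ht c hc => hC t ht _ (hR c hc)⟩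

theorem exists_tsum_enorm_sq_discMap_sub_le {L : ℝ≥0} (hM : LipschitzWith L M) (hM0 : M 0 = 0)
    (ha : wienerNorm 1 a ≠ ⊤) (hx : wienerNorm 1 x ≠ ⊤) (v : E) :
    ∃ C : ℝ≥0, ∀ (t : ℝ) (c d : Freq → E), wienerNorm 0 c ≤ 1 → wienerNorm 0 d ≤ 1 →
      ∑' k, ‖discMap M a x v t c k - discMap M a x v t d k‖ₑ ^ 2
        ≤ C * ‖t‖ₑ ^ 2 * ∑' k, ‖c k - d k‖ₑ ^ 2 := by
  obtain ⟨R, hR⟩ := exists_wienerNorm_discCoeff_le ha hx v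
  obtain ⟨K, hK⟩ := exists_tsum_enorm_sq_discNonlin_sub_le hM hM0 R
  have hx' : sobolevSq 1 x ≠ ⊤ :=
    ne_top_of_le_ne_top (ENNReal.pow_ne_top hx) (sobolevSq_le_wienerNorm_sq 1 x)
  lift 2 * (sobolevSq 1 x + 1) to ℝ≥0 using by finiteness with X hX
  refine ⟨K * X, fun t c d hc hd => (hK t _ _ (hR c hc) (hR d hd)).trans ?_⟩
  have hdiff := sobolevSq_discCoeff_sub_le 0 a x v c d
  rw [zero_add, sobolevSq_zero, ← hX] at hdiff
  calc _ ≤ K * ‖t‖ₑ ^ 2 * (X * ∑' k, ‖c k - d k‖ₑ ^ 2) := by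
        gcongr
        exact hdiff
    _ = _ := by
        push_cast
        ring

theorem eventually_mul_enorm_lt (A : ℝ≥0) {ε : ℝ≥0∞} (hε : 0 < ε) :
    ∀ᶠ t : ℝ in 𝓝 0, A * ‖t‖ₑ < ε := by
  have hlim : Tendsto (fun t : ℝ => A * ‖t‖ₑ) (𝓝 0) (𝓝 0) := by
    simpa using ENNReal.Tendsto.const_mul ((continuous_enorm (E := ℝ)).tendsto 0)
      (.inr ENNReal.coe_ne_top)
  exact hlim.eventually_lt_const hε

theorem exists_discMap_fixedPoint (hM0 : M 0 = 0) (hM : ContDiff ℝ (5 : ℕ) M)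
    (hsupp : HasCompactSupport M) (ha : wienerNorm 3 a ≠ ⊤) (hx : wienerNorm 3 x ≠ ⊤) (v : E) :
    ∃ C : ℝ≥0, ∀ᶠ t in 𝓝 (0 : ℝ), ∃ c : Freq → E, wienerNorm 2 c ≤ C * ‖t‖ₑ ∧
      wienerNorm 2 c ≤ 1 ∧ discMap M a x v t c = c := by
  have := FiniteDimensional.complete ℂ E
  obtain ⟨L, hL⟩ := hM.lipschitzWith_of_hasCompactSupport hsupp (by simp)
  obtain ⟨C, hC⟩ := exists_wienerNorm_discMap_le hM0 hM hsupp ha hx v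
  obtain ⟨K, hK⟩ := exists_tsum_enorm_sq_discMap_sub_le hL hM0
    (ne_top_of_le_ne_top ha (wienerNorm_mono (by norm_num) a))
    (ne_top_of_le_ne_top hx (wienerNorm_mono (by norm_num) x)) v
  have hq : (0 : ℝ≥0∞) < ((2⁻¹ : ℝ≥0) : ℝ≥0∞) ^ 2 := by
    exact_mod_cast (by positivity : (0 : ℝ≥0) < 2⁻¹ ^ 2)
  refine ⟨C, ?_⟩
  filter_upwards [eventually_mul_enorm_lt 1 one_pos, eventually_mul_enorm_lt C one_pos,
    eventually_mul_enorm_lt K hq] with t ht1 htC htK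
  rw [ENNReal.coe_one, one_mul] at ht1
  let S : Set (Freq → E) := {c | wienerNorm 2 c ≤ C * ‖t‖ₑ}
  have hS1 {c : Freq → E} (hc : c ∈ S) : wienerNorm 2 c ≤ 1 := le_trans hc htC.le
  have hS0 {c : Freq → E} (hc : c ∈ S) : wienerNorm 0 c ≤ 1 :=
    (wienerNorm_mono (by norm_num) c).trans (hS1 hc)
  obtain ⟨c, hcS, hc⟩ := exists_fixedPoint_of_tsum_enorm_sq_le (isClosed_wienerNorm_le 2 _)
    (S := S) ⟨0, by simp [S, wienerNorm]⟩
    (fun c hc => memℓp_two_of_wienerNorm_ne_top (ne_top_of_le_ne_top ENNReal.one_ne_top (hS1 hc)))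
    (fun c hc => hC t ht1.le c (hS1 hc)) (q := 2⁻¹) (by norm_num) fun c hc d hd => by
      refine (hK t c d (hS0 hc) (hS0 hd)).trans ?_
      gcongr
      refine le_trans ?_ htK.le
      gcongr
      exact pow_le_of_le_one zero_le ht1.le two_ne_zero
  exact ⟨c, hcS, hS1 hcS, hc⟩

end DiscEquation

section LocalDiscs

theorem exists_wienerNorm_ne_top_trigSeries_eventuallyEq (s : ℕ) :
    ∃ a x : Freq → ℂ, wienerNorm s a ≠ ⊤ ∧ wienerNorm s x ≠ ⊤ ∧ trigSeries a =ᶠ[𝓝 0] id ∧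
      trigSeries x =ᶠ[𝓝 0] fun ζ => (ζ.re : ℂ) := by
  obtain ⟨Z, hZ, hd, hid⟩ := exists_doublyPeriodic_contDiff_eventuallyEq_id (s + 3)
  let X : ℂ → ℂ := fun ζ => ((Z ζ).re : ℂ)
  have hX : DoublyPeriodic X := hZ.comp fun w => (w.re : ℂ)
  have hXd : ContDiff ℝ (s + 3 : ℕ) X :=
    Complex.ofRealCLM.contDiff.comp (Complex.reCLM.contDiff.comp hd)
  have hseries {F : ℂ → ℂ} (hF : DoublyPeriodic F) (hFd : ContDiff ℝ (s + 3 : ℕ) F) :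
      trigSeries (latticeCoeff F) = F :=
    trigSeries_latticeCoeff hF hFd.continuous (ne_top_of_le_ne_top
      (wienerNorm_latticeCoeff_ne_top s hF hFd) (wienerNorm_mono (Nat.zero_le s) _))
  refine ⟨latticeCoeff Z, latticeCoeff X, wienerNorm_latticeCoeff_ne_top s hZ hd,
    wienerNorm_latticeCoeff_ne_top s hX hXd, ?_, ?_⟩
  · rwa [hseries hZ hd]
  · rw [hseries hX hXd]
    filter_upwards [hid] with ζ hζ
    rw [show X ζ = ((Z ζ).re : ℂ) from rfl, hζ, id]

section

variable {E : Type*} [NormedAddCommGroup E] [NormedSpace ℂ E] [CompleteSpace E]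
  {a x : Freq → ℂ}

theorem trigSeries_discCoeff (ha : wienerNorm 0 a ≠ ⊤) (hx : wienerNorm 1 x ≠ ⊤) (v : E)
    {c : Freq → E} (hc : wienerNorm 0 c ≠ ⊤) :
    trigSeries (discCoeff a x v c)
      = (fun ζ => trigSeries a ζ • v) + trigSeries (dbarSolve x c) := by
  have ha' : wienerNorm 0 (fun k => a k • v) ≠ ⊤ := by
    rw [wienerNorm_smul_const]
    finiteness
  have hb : wienerNorm 1 (dbarSolve x c) ≠ ⊤ :=
    ne_top_of_le_ne_top (by finiteness) (wienerNorm_dbarSolve_le 0 x c)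
  rw [discCoeff, trigSeries_add ha' (ne_top_of_le_ne_top hb (wienerNorm_mono zero_le_one _)),
    trigSeries_smul_const ha]

variable [NormedSpace ℝ E] [IsScalarTower ℝ ℂ E]

theorem dbar_trigSeries_discCoeff (ha : wienerNorm 0 a ≠ ⊤) (hx : wienerNorm 1 x ≠ ⊤) (v : E)
    {c : Freq → E} (hc : wienerNorm 0 c ≠ ⊤) {ζ : ℂ} (haid : trigSeries a =ᶠ[𝓝 ζ] id)
    (hre : trigSeries x =ᶠ[𝓝 ζ] fun ζ => (ζ.re : ℂ)) :
    dbar (trigSeries (discCoeff a x v c)) ζ = trigSeries c ζ := by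
  have hb : wienerNorm 1 (dbarSolve x c) ≠ ⊤ :=
    ne_top_of_le_ne_top (by finiteness) (wienerNorm_dbarSolve_le 0 x c)
  have hlin : HasFDerivAt (fun ζ => trigSeries a ζ • v)
      ((ContinuousLinearMap.id ℝ ℂ).smulRight v) ζ :=
    ((hasFDerivAt_id ζ).congr_of_eventuallyEq haid).smul_const v
  rw [trigSeries_discCoeff ha hx v hc,
    dbar_add hlin.differentiableAt (hasFDerivAt_trigSeries hb ζ).differentiableAt,
    dbar_trigSeries_dbarSolve hx hc hre, dbar, hlin.fderiv]
  simp [smul_smul]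

theorem enorm_fderiv_trigSeries_discCoeff_sub_le (ha : wienerNorm 0 a ≠ ⊤)
    (hx : wienerNorm 1 x ≠ ⊤) (v : E) {c : Freq → E} (hc : wienerNorm 0 c ≠ ⊤) {ζ : ℂ}
    (haid : trigSeries a =ᶠ[𝓝 ζ] id) :
    ‖fderiv ℝ (trigSeries (discCoeff a x v c)) ζ 1 - v‖ₑ
      ≤ ENNReal.ofReal (2 * Real.pi) * ((wienerNorm 1 x + 1) * wienerNorm 0 c) := by
  have hb : wienerNorm 1 (dbarSolve x c) ≠ ⊤ :=
    ne_top_of_le_ne_top (by finiteness) (wienerNorm_dbarSolve_le 0 x c)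
  have hlin : HasFDerivAt (fun ζ => trigSeries a ζ • v)
      ((ContinuousLinearMap.id ℝ ℂ).smulRight v) ζ :=
    ((hasFDerivAt_id ζ).congr_of_eventuallyEq haid).smul_const v
  have hdiff : fderiv ℝ (trigSeries (discCoeff a x v c)) ζ 1 - v
      = trigSeries (fun k => fderivCoeff (dbarSolve x c) k 1) ζ := by
    rw [trigSeries_discCoeff ha hx v hc, fderiv_add hlin.differentiableAt
      (hasFDerivAt_trigSeries hb ζ).differentiableAt, hlin.fderiv, add_apply,
      fderiv_trigSeries_apply hb]
    simp
  calc _ ≤ wienerNorm 0 (fun k => fderivCoeff (dbarSolve x c) k 1) := by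
        rw [hdiff]
        exact enorm_trigSeries_le _ ζ
    _ ≤ ENNReal.ofReal (2 * Real.pi) * wienerNorm 1 (dbarSolve x c) := by
        simpa using wienerNorm_fderivCoeff_apply_le 0 (dbarSolve x c) 1
    _ ≤ _ := by
        gcongr
        exact wienerNorm_dbarSolve_le 0 x c

theorem trigSeries_eq_discNonlin_of_discMap_eq {M : E → E →L[ℝ] E} (hM : Continuous M)
    (ha : wienerNorm 1 a ≠ ⊤) (hx : wienerNorm 1 x ≠ ⊤) {v : E} {t : ℝ} {c : Freq → E}
    (hc : wienerNorm 0 c ≠ ⊤) (hfix : discMap M a x v t c = c) :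
    trigSeries c = discNonlin M t (discCoeff a x v c) := by
  have hb : wienerNorm 1 (discCoeff a x v c) ≠ ⊤ :=
    ne_top_of_le_ne_top (by finiteness) (wienerNorm_discCoeff_le 0 a x v c)
  have hseries := trigSeries_latticeCoeff (doublyPeriodic_discNonlin M t (discCoeff a x v c))
    (continuous_discNonlin hM t hb) (by rwa [← discMap, hfix])
  rwa [← discMap, hfix] at hseries

end

variable {E : Type*} [NormedAddCommGroup E] [InnerProductSpace ℂ E] [FiniteDimensional ℂ E]
  [NormedSpace ℝ E] [IsScalarTower ℝ ℂ E]

theorem exists_dbar_eq_rescaled {M : E → E →L[ℝ] E} (hM0 : M 0 = 0) (hM : ContDiff ℝ (5 : ℕ) M)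
    (hsupp : HasCompactSupport M) (v : E) :
    ∃ C : ℝ≥0, ∀ᶠ t in 𝓝 (0 : ℝ), ∃ f : ℂ → E, ContDiff ℝ 2 f ∧ ‖f 0‖ₑ ≤ C ∧
      ‖fderiv ℝ f 0 1 - v‖ₑ ≤ C * ‖t‖ₑ ∧
      ∀ᶠ ζ in 𝓝 0, dbar f ζ = M (t • f ζ) (fderiv ℝ f ζ Complex.I) := by
  have := FiniteDimensional.complete ℂ E
  obtain ⟨a, x, ha, hx, haid, hre⟩ := exists_wienerNorm_ne_top_trigSeries_eventuallyEq 3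
  have ha1 := ne_top_of_le_ne_top ha (wienerNorm_mono (by norm_num : 1 ≤ 3) a)
  have ha0 := ne_top_of_le_ne_top ha (wienerNorm_mono (Nat.zero_le 3) a)
  have hx1 := ne_top_of_le_ne_top hx (wienerNorm_mono (by norm_num : 1 ≤ 3) x)
  obtain ⟨R, hR⟩ := exists_wienerNorm_discCoeff_le ha hx v
  obtain ⟨K, hK⟩ := exists_discMap_fixedPoint hM0 hM hsupp ha hx v
  lift ENNReal.ofReal (2 * Real.pi) * (wienerNorm 1 x + 1) to ℝ≥0 using by finiteness with A hA
  refine ⟨max R (A * K), ?_⟩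
  filter_upwards [hK] with t ⟨c, hcK, hc1, hfix⟩
  have hc01 := wienerNorm_mono (Nat.zero_le 2) c
  have hc0 : wienerNorm 0 c ≠ ⊤ := ne_top_of_le_ne_top ENNReal.one_ne_top (hc01.trans hc1)
  have hb : wienerNorm 2 (discCoeff a x v c) ≤ R :=
    (wienerNorm_mono (by norm_num) _).trans (hR c hc1)
  refine ⟨trigSeries (discCoeff a x v c),
    contDiff_trigSeries 2 (ne_top_of_le_ne_top ENNReal.coe_ne_top hb), ?_, ?_, ?_⟩
  · exact (enorm_trigSeries_le _ 0).trans ((wienerNorm_mono (Nat.zero_le 2) _).trans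
      (hb.trans (by gcongr; exact le_max_left _ _)))
  · calc _ ≤ ENNReal.ofReal (2 * Real.pi) * ((wienerNorm 1 x + 1) * wienerNorm 0 c) :=
          enorm_fderiv_trigSeries_discCoeff_sub_le ha0 hx1 v hc0 haid
      _ = A * wienerNorm 0 c := by rw [hA, mul_assoc]
      _ ≤ A * (K * ‖t‖ₑ) := by
          gcongr
          exact hc01.trans hcK
      _ = (A * K : ℝ≥0) * ‖t‖ₑ := by
          push_cast
          ring
      _ ≤ _ := by
          gcongr
          exact le_max_right _ _
  · filter_upwards [haid.eventuallyEq_nhds, hre.eventuallyEq_nhds] with ζ haζ hreζ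
    rw [dbar_trigSeries_discCoeff ha0 hx1 v hc0 haζ hreζ,
      trigSeries_eq_discNonlin_of_discMap_eq hM.continuous ha1 hx1 hc0 hfix, discNonlin]

end LocalDiscs

end WienerAlgebra

section JHolomorphicDiscs

theorem map_I_mul_of_map_one_add_map_I {E : Type*} [NormedAddCommGroup E] [NormedSpace ℝ E]
    {A : E →L[ℝ] E} (hA : ∀ y, A (A y) = -y) {L : ℂ →L[ℝ] E} (hL : L 1 + A (L Complex.I) = 0)
    (ξ : ℂ) : L (Complex.I * ξ) = A (L ξ) := by
  have hL1 : L 1 = -A (L Complex.I) := eq_neg_of_add_eq_zero_left hL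
  have hξ : ξ = ξ.re • 1 + ξ.im • Complex.I := by simp
  have hIξ : Complex.I * ξ = ξ.re • Complex.I - ξ.im • 1 := by
    apply Complex.ext <;> simp
  rw [hIξ]
  conv_rhs => rw [hξ]
  simp only [map_sub, map_add, map_smul, map_neg, hL1, hA]
  module

theorem exists_isJHolo_of_apply_zero_eq_I_smul {E : Type*} [NormedAddCommGroup E]
    [InnerProductSpace ℂ E] [FiniteDimensional ℂ E] [NormedSpace ℝ E] [IsScalarTower ℝ ℂ E]
    {J : E → E →L[ℝ] E} (hJ : ContDiffAt ℝ 5 J 0) (hJ0 : ∀ y, J 0 y = Complex.I • y)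
    (hsq : ∀ᶠ z in 𝓝 0, ∀ y, J z (J z y) = -y) (v : E) {W : Set (E × E)} (hW : W ∈ 𝓝 (0, v)) :
    ∃ f : ℂ → E, ContDiff ℝ 2 f ∧ (∃ Ω ∈ 𝓝 0, IsJHolo J Ω f) ∧
      ∃ t : ℝ, (f 0, t • fderiv ℝ f 0 1) ∈ W := by
  have : FiniteDimensional ℝ E := FiniteDimensional.trans ℝ ℂ E
  obtain ⟨M, hM, hsupp, hMJ⟩ := exists_contDiff_hasCompactSupport_eventuallyEq (n := 5)
    (contDiffAt_const (c := J 0) |>.sub hJ)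
  obtain ⟨C, hC⟩ := exists_dbar_eq_rescaled (by simpa using hMJ.eq_of_nhds) hM hsupp v
  obtain ⟨ε, hε, hgood⟩ := Metric.eventually_nhds_iff_ball.1 (hMJ.and hsq)
  obtain ⟨δ, hδ, hδW⟩ := Metric.mem_nhds_iff.1 hW
  have hr : 0 < ENNReal.ofReal (min ε δ) := ENNReal.ofReal_pos.2 (lt_min hε hδ)
  obtain ⟨t, ⟨⟨f, hf, hf0, hf1, hdbar⟩, htC⟩, ht⟩ := (((hC.and
    (eventually_mul_enorm_lt C hr)).filter_mono nhdsWithin_le_nhds).and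
    self_mem_nhdsWithin).exists (f := 𝓝[≠] (0 : ℝ))
  have hnorm {y : E} (hy : ‖y‖ₑ ≤ C * ‖t‖ₑ) : ‖y‖ < min ε δ := by
    have hlt := hy.trans_lt htC
    rwa [← ofReal_norm, ENNReal.ofReal_lt_ofReal_iff (lt_min hε hδ)] at hlt
  have htf0 : ‖t • f 0‖ < min ε δ := hnorm (by rw [enorm_smul, mul_comm]; gcongr)
  have hfderiv (ζ : ℂ) : fderiv ℝ (fun ζ => t • f ζ) ζ = t • fderiv ℝ f ζ :=
    fderiv_fun_const_smul (hf.differentiable (by norm_num) ζ) t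
  have hnear : ∀ᶠ ζ in 𝓝 0, t • f ζ ∈ Metric.ball 0 ε :=
    (hf.continuous.const_smul t).continuousAt.eventually_mem
      (Metric.isOpen_ball.mem_nhds (mem_ball_zero_iff.2 (htf0.trans_le (min_le_left _ _))))
  refine ⟨fun ζ => t • f ζ, hf.const_smul t, ⟨_, hnear.and hdbar, ?_⟩, t⁻¹, hδW ?_⟩
  · intro ζ ⟨hζ, hζdbar⟩ ξ
    obtain ⟨hM, hJsq⟩ := hgood _ hζ
    rw [hM, dbar, sub_apply, hJ0, sub_eq_neg_add, add_left_inj] at hζdbar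
    refine map_I_mul_of_map_one_add_map_I hJsq ?_ ξ
    rw [hfderiv, smul_apply, smul_apply, map_smul, ← smul_add, hζdbar,
      neg_add_cancel, smul_zero]
  · rw [hfderiv, smul_apply, inv_smul_smul₀ ht, mem_ball_iff_norm, Prod.mk_sub_mk, sub_zero]
    exact max_lt (htf0.trans_le (min_le_right _ _)) ((hnorm hf1).trans_le (min_le_right _ _))

variable {E F : Type*} [NormedAddCommGroup E] [NormedSpace ℝ E] [NormedAddCommGroup F]
  [NormedSpace ℝ F]

theorem exists_continuousLinearEquiv_I_smul [FiniteDimensional ℝ E] {A : E →L[ℝ] E}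
    (hA : ∀ y, A (A y) = -y) :
    ∃ (m : ℕ) (Φ : E ≃L[ℝ] EuclideanSpace ℂ (Fin m)), ∀ y, Φ (A y) = Complex.I • Φ y := by
  let φ : ℂ →ₐ[ℝ] Module.End ℝ E :=
    Complex.lift ⟨(A : E →ₗ[ℝ] E), LinearMap.ext fun y => by simpa using hA y⟩
  let : Module ℂ E := Module.compHom E φ.toRingHom
  have hI (y : E) : Complex.I • y = A y := by
    change φ Complex.I y = A y
    simp [φ]
  have : IsScalarTower ℝ ℂ E := IsScalarTower.of_algebraMap_smul fun r y => by
    change φ (algebraMap ℝ ℂ r) y = r • y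
    rw [φ.commutes, Module.algebraMap_end_apply]
  have : Module.Finite ℂ E := Module.Finite.of_restrictScalars_finite ℝ ℂ E
  let Φ : E ≃ₗ[ℂ] EuclideanSpace ℂ (Fin (Module.finrank ℂ E)) :=
    LinearEquiv.ofFinrankEq _ _ finrank_euclideanSpace_fin.symm
  exact ⟨_, (Φ.restrictScalars ℝ).toContinuousLinearEquiv, fun y => by
    rw [← hI]
    exact map_smul Φ Complex.I y⟩

theorem fderiv_const_add_equiv_comp {G : Type*} [NormedAddCommGroup G] [NormedSpace ℝ G]
    (Ψ : F ≃L[ℝ] E) (z₀ : E) (g : G → F) (ζ : G) :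
    fderiv ℝ (fun ζ => z₀ + Ψ (g ζ)) ζ = (Ψ : F →L[ℝ] E) ∘L fderiv ℝ g ζ :=
  (fderiv_const_add _).trans Ψ.comp_fderiv

theorem IsJHolo.const_add_symm_comp {J : E → E →L[ℝ] E} {Ω : Set ℂ} (Φ : E ≃L[ℝ] F) (z₀ : E)
    {g : ℂ → F} (hg : IsJHolo
      (fun w => (Φ : E →L[ℝ] F) ∘L J (z₀ + Φ.symm w) ∘L (Φ.symm : F →L[ℝ] E)) Ω g) :
    IsJHolo J Ω (fun ζ => z₀ + Φ.symm (g ζ)) := by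
  intro ζ hζ ξ
  rw [fderiv_const_add_equiv_comp]
  simpa using congrArg Φ.symm (hg ζ hζ ξ)

theorem exists_isJHolo_fderiv_mem [FiniteDimensional ℝ E] {D : Set E} (hD : IsOpen D)
    {J : E → E →L[ℝ] E} (hJ : ContDiffOn ℝ 5 J D) (hsq : ∀ z ∈ D, ∀ y, J z (J z y) = -y) {z₀ : E}
    (hz₀ : z₀ ∈ D) (v : E) {W : Set (E × E)} (hW : W ∈ 𝓝 (z₀, v)) :
    ∃ (Ω : Set ℂ) (f : ℂ → E), IsOpen Ω ∧ 0 ∈ Ω ∧ ContDiff ℝ 2 f ∧ Set.MapsTo f Ω D ∧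
      IsJHolo J Ω f ∧ ∃ t : ℝ, (f 0, t • fderiv ℝ f 0 1) ∈ W := by
  obtain ⟨m, Φ, hΦ⟩ := exists_continuousLinearEquiv_I_smul (hsq z₀ hz₀)
  let J' (w : EuclideanSpace ℂ (Fin m)) :=
    (Φ : E →L[ℝ] EuclideanSpace ℂ (Fin m)) ∘L J (z₀ + Φ.symm w) ∘L
      (Φ.symm : EuclideanSpace ℂ (Fin m) →L[ℝ] E)
  have hT : ContDiff ℝ 5 fun w => z₀ + Φ.symm w := contDiff_const.add Φ.symm.contDiff
  have hT0 : z₀ + Φ.symm 0 = z₀ := by simp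
  have hTD : ∀ᶠ w in 𝓝 0, z₀ + Φ.symm w ∈ D :=
    hT.continuous.continuousAt.eventually_mem (by simpa only [hT0] using hD.mem_nhds hz₀)
  have hJ' : ContDiffAt ℝ 5 J' 0 := by
    refine contDiffAt_const.clm_comp (ContDiffAt.clm_comp ?_ contDiffAt_const)
    exact (hJ.contDiffAt (hD.mem_nhds (hT0.symm ▸ hz₀))).comp 0 hT.contDiffAt
  have hJ'0 (y) : J' 0 y = Complex.I • y := by simp [J', hΦ]
  have hJ'sq : ∀ᶠ w in 𝓝 0, ∀ y, J' w (J' w y) = -y := by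
    filter_upwards [hTD] with w hw y
    simp [J', hsq _ hw]
  have hTW : ∀ᶠ p in 𝓝 ((0, Φ v) : EuclideanSpace ℂ (Fin m) × EuclideanSpace ℂ (Fin m)),
      (z₀ + Φ.symm p.1, Φ.symm p.2) ∈ W ∩ D ×ˢ Set.univ := by
    refine ContinuousAt.eventually_mem (by fun_prop) ?_
    simpa using inter_mem hW (prod_mem_nhds (hD.mem_nhds hz₀) univ_mem)
  obtain ⟨g, hg, ⟨S, hS, hgS⟩, t, ht⟩ :=
    exists_isJHolo_of_apply_zero_eq_I_smul hJ' hJ'0 hJ'sq (Φ v) hTW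
  let f (ζ : ℂ) := z₀ + Φ.symm (g ζ)
  have hf : ContDiff ℝ 2 f := contDiff_const.add (Φ.symm.contDiff.comp hg)
  refine ⟨interior S ∩ f ⁻¹' D, f, isOpen_interior.inter (hD.preimage hf.continuous),
    ⟨mem_interior_iff_mem_nhds.2 hS, ht.2.1⟩, hf, fun ζ hζ => hζ.2,
    fun ζ hζ => hgS.const_add_symm_comp Φ z₀ ζ (interior_subset hζ.1), t, ?_⟩
  rw [fderiv_const_add_equiv_comp]
  simpa using ht.1

end JHolomorphicDiscs

section LeviForm

variable {E : Type*} [NormedAddCommGroup E] [NormedSpace ℝ E] {J : E → E →L[ℝ] E} {u : E → ℝ}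

/-- The 1-form `dᶜu = -du ∘ J`, of which `acDDc J u` is the exterior derivative. -/
noncomputable def acDc (J : E → E →L[ℝ] E) (u : E → ℝ) (z : E) : E →L[ℝ] ℝ :=
  -(fderiv ℝ u z).comp (J z)

theorem contDiffAt_acDc {z : E} (hJ : ContDiffAt ℝ 1 J z) (hu : ContDiffAt ℝ 2 u z) :
    ContDiffAt ℝ 1 (acDc J u) z :=
  ((hu.fderiv_right (by norm_num)).clm_comp hJ).neg

theorem fderiv_apply_comp_eq_neg_fderiv_acDc {z : E} (h : DifferentiableAt ℝ (acDc J u) z)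
    (v w : E) :
    fderiv ℝ (fun z => fderiv ℝ u z (J z w)) z v = -fderiv ℝ (acDc J u) z v w := by
  have hneg : (fun z => fderiv ℝ u z (J z w)) = fun z => -acDc J u z w := by
    funext z
    simp [acDc]
  rw [hneg, (h.hasFDerivAt.clm_apply (hasFDerivAt_const w z)).fun_neg.fderiv]
  simp

theorem acLevi_eq_fderiv_acDc {z : E} (h : DifferentiableAt ℝ (acDc J u) z) (v : E) :
    acLevi J u z v = fderiv ℝ (acDc J u) z v (J z v) - fderiv ℝ (acDc J u) z (J z v) v := by
  rw [acLevi, acDDc, fderiv_apply_comp_eq_neg_fderiv_acDc h, fderiv_apply_comp_eq_neg_fderiv_acDc h,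
    neg_neg, sub_eq_add_neg]

theorem acLevi_smul {z : E} (h : DifferentiableAt ℝ (acDc J u) z) (t : ℝ) (v : E) :
    acLevi J u z (t • v) = t ^ 2 * acLevi J u z v := by
  simp only [acLevi_eq_fderiv_acDc h, map_smul, smul_apply, smul_eq_mul]
  ring

theorem continuousAt_acLevi {z : E} (hJ : ContDiffAt ℝ 1 J z) (hu : ContDiffAt ℝ 2 u z) (v : E) :
    ContinuousAt (fun p : E × E => acLevi J u p.1 p.2) (z, v) := by
  have hdc := contDiffAt_acDc hJ hu
  have hfst : ContinuousAt Prod.fst (z, v) := continuousAt_fst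
  have hJv : ContinuousAt (fun p : E × E => J p.1 p.2) (z, v) :=
    (hJ.continuousAt.comp' hfst).clm_apply continuousAt_snd
  have hd : ContinuousAt (fun p : E × E => fderiv ℝ (acDc J u) p.1) (z, v) :=
    (hdc.continuousAt_fderiv one_ne_zero).comp' hfst
  refine (((hd.clm_apply continuousAt_snd).clm_apply hJv).sub
    ((hd.clm_apply hJv).clm_apply continuousAt_snd)).congr ?_
  filter_upwards [hfst.eventually (hdc.eventually (by simp))] with p hp
  exact (acLevi_eq_fderiv_acDc (hp.differentiableAt one_ne_zero) p.2).symm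

theorem IsJHolo.fderiv_comp_one {Ω : Set ℂ} {f : ℂ → E} (hhol : IsJHolo J Ω f) {ζ : ℂ}
    (hζ : ζ ∈ Ω) (hf : DifferentiableAt ℝ f ζ) (hu : DifferentiableAt ℝ u (f ζ)) :
    fderiv ℝ (u ∘ f) ζ 1 = acDc J u (f ζ) (fderiv ℝ f ζ Complex.I) := by
  simp [fderiv_comp ζ hu hf, acDc, ← hhol ζ hζ]

theorem IsJHolo.fderiv_comp_I {Ω : Set ℂ} {f : ℂ → E} (hhol : IsJHolo J Ω f) {ζ : ℂ}
    (hζ : ζ ∈ Ω) (hf : DifferentiableAt ℝ f ζ) (hu : DifferentiableAt ℝ u (f ζ)) :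
    fderiv ℝ (u ∘ f) ζ Complex.I = -acDc J u (f ζ) (fderiv ℝ f ζ 1) := by
  simp [fderiv_comp ζ hu hf, acDc, ← hhol ζ hζ]

theorem fderiv_apply_fderiv {V G : Type*} [NormedAddCommGroup V] [NormedSpace ℝ V]
    [NormedAddCommGroup G] [NormedSpace ℝ G] {ω : E → E →L[ℝ] G} {f : V → E} {x : V}
    (hω : DifferentiableAt ℝ ω (f x)) (hf : DifferentiableAt ℝ f x)
    (hf' : DifferentiableAt ℝ (fderiv ℝ f) x) (a b : V) :
    fderiv ℝ (fun y => ω (f y) (fderiv ℝ f y a)) x b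
      = fderiv ℝ ω (f x) (fderiv ℝ f x b) (fderiv ℝ f x a)
        + ω (f x) (fderiv ℝ (fderiv ℝ f) x b a) := by
  have hderiv := (hω.hasFDerivAt.comp x hf.hasFDerivAt).clm_apply
    (hf'.hasFDerivAt.clm_apply (hasFDerivAt_const a x))
  refine (congrArg (· b) hderiv.fderiv).trans ?_
  simp [add_comm]

theorem IsJHolo.lap_comp {Ω : Set ℂ} {f : ℂ → E} (hhol : IsJHolo J Ω f) {ζ : ℂ} (hΩ : Ω ∈ 𝓝 ζ)
    (hf : ContDiffAt ℝ 2 f ζ) (hJ : ContDiffAt ℝ 1 J (f ζ)) (hu : ContDiffAt ℝ 2 u (f ζ)) :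
    lap (u ∘ f) ζ = acLevi J u (f ζ) (fderiv ℝ f ζ 1) := by
  have hdc : DifferentiableAt ℝ (acDc J u) (f ζ) :=
    (contDiffAt_acDc hJ hu).differentiableAt one_ne_zero
  have hf' : DifferentiableAt ℝ (fderiv ℝ f) ζ :=
    (hf.fderiv_right (m := 1) (by norm_num)).differentiableAt one_ne_zero
  have hf₁ : DifferentiableAt ℝ f ζ := hf.differentiableAt two_ne_zero
  have hdiff : ∀ᶠ w in 𝓝 ζ, w ∈ Ω ∧ DifferentiableAt ℝ f w ∧ DifferentiableAt ℝ u (f w) := by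
    filter_upwards [hΩ, hf.eventually (by simp), hf.continuousAt.eventually
      (hu.eventually (by simp))] with w hw hfw huw
    exact ⟨hw, hfw.differentiableAt two_ne_zero, huw.differentiableAt two_ne_zero⟩
  have hx : (fun w => fderiv ℝ (u ∘ f) w 1) =ᶠ[𝓝 ζ]
      fun w => acDc J u (f w) (fderiv ℝ f w Complex.I) :=
    hdiff.mono fun w hw => hhol.fderiv_comp_one hw.1 hw.2.1 hw.2.2
  have hy : (fun w => fderiv ℝ (u ∘ f) w Complex.I) =ᶠ[𝓝 ζ]
      fun w => -acDc J u (f w) (fderiv ℝ f w 1) :=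
    hdiff.mono fun w hw => hhol.fderiv_comp_I hw.1 hw.2.1 hw.2.2
  have hsymm : fderiv ℝ (fderiv ℝ f) ζ 1 Complex.I = fderiv ℝ (fderiv ℝ f) ζ Complex.I 1 :=
    (hf.isSymmSndFDerivAt (by simp)).eq 1 Complex.I
  have hJx : J (f ζ) (fderiv ℝ f ζ 1) = fderiv ℝ f ζ Complex.I := by
    rw [← hhol ζ (mem_of_mem_nhds hΩ), mul_one]
  rw [acLevi_eq_fderiv_acDc hdc, hJx, lap, hx.fderiv_eq, hy.fderiv_eq, fderiv_fun_neg, neg_apply,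
    fderiv_apply_fderiv hdc hf₁ hf', fderiv_apply_fderiv hdc hf₁ hf', hsymm]
  ring

theorem acLevi_nonneg_of_lap_comp_nonneg [FiniteDimensional ℝ E] {D : Set E} (hD : IsOpen D)
    (hJ : ContDiffOn ℝ 5 J D) (hsq : ∀ z ∈ D, ∀ y, J z (J z y) = -y) (hu : ContDiffOn ℝ 2 u D)
    (hlap : ∀ Ω : Set ℂ, IsOpen Ω → ∀ f : ℂ → E, ContDiffOn ℝ 2 f Ω → Set.MapsTo f Ω D →
      IsJHolo J Ω f → ∀ ζ ∈ Ω, 0 ≤ lap (u ∘ f) ζ) {z : E} (hz : z ∈ D) (v : E) :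
    0 ≤ acLevi J u z v := by
  have hJat {w : E} (hw : w ∈ D) : ContDiffAt ℝ 1 J w :=
    (hJ.contDiffAt (hD.mem_nhds hw)).of_le (by norm_num)
  have huat {w : E} (hw : w ∈ D) : ContDiffAt ℝ 2 u w := hu.contDiffAt (hD.mem_nhds hw)
  by_contra! hneg
  obtain ⟨Ω, f, hΩ, h0, hf, hfD, hhol, t, ht⟩ := exists_isJHolo_fderiv_mem hD hJ hsq hz v
    ((continuousAt_acLevi (hJat hz) (huat hz) v).eventually_lt_const hneg)
  have hf0 := hfD h0
  have hpos := hlap Ω hΩ f hf.contDiffOn hfD hhol 0 h0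
  rw [hhol.lap_comp (hΩ.mem_nhds h0) hf.contDiffAt (hJat hf0) (huat hf0)] at hpos
  have hlt : acLevi J u (f 0) (t • fderiv ℝ f 0 1) < 0 := ht
  refine hlt.not_ge ?_
  rw [acLevi_smul ((contDiffAt_acDc (hJat hf0) (huat hf0)).differentiableAt one_ne_zero)]
  positivity

end LeviForm

theorem stmt_6_general {E : Type*} [NormedAddCommGroup E] [NormedSpace ℝ E]
    [FiniteDimensional ℝ E] {D : Set E} (hD : IsOpen D) {J : E → E →L[ℝ] E}
    (hJ : ContDiffOn ℝ 5 J D)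
    (hJsq : ∀ z ∈ D, (J z).comp (J z) = -ContinuousLinearMap.id ℝ E) {u : E → ℝ}
    (hu : ContDiffOn ℝ 2 u D) :
    (∀ Ω : Set ℂ, IsOpen Ω → ∀ f : ℂ → E, ContDiffOn ℝ 2 f Ω → Set.MapsTo f Ω D →
        IsJHolo J Ω f → ∀ ζ ∈ Ω, 0 ≤ lap (u ∘ f) ζ) ↔
      ∀ z ∈ D, ∀ v, 0 ≤ acLevi J u z v := by
  have hJJ (z) (hz : z ∈ D) (y : E) : J z (J z y) = -y := by
    simpa using DFunLike.congr_fun (hJsq z hz) y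
  refine ⟨fun hlap z hz v => acLevi_nonneg_of_lap_comp_nonneg hD hJ hJJ hu hlap hz v,
    fun hlevi Ω hΩ f hf hfD hhol ζ hζ => ?_⟩
  have hDζ := hD.mem_nhds (hfD hζ)
  rw [hhol.lap_comp (hΩ.mem_nhds hζ) (hf.contDiffAt (hΩ.mem_nhds hζ))
    ((hJ.contDiffAt hDζ).of_le (by norm_num)) (hu.contDiffAt hDζ)]
  exact hlevi _ (hfD hζ) _

/-- A C² function is J-plurisubharmonic (subharmonic along every J-holomorphic
disk) if and only if its Levi form is everywhere positive semidefinite. -/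
theorem stmt_6 {n : ℕ} (hn : 1 ≤ n)
    (D : Set (EuclideanSpace ℝ (Fin (2 * n)))) (hD : IsOpen D)
    (J : EuclideanSpace ℝ (Fin (2 * n)) →
      (EuclideanSpace ℝ (Fin (2 * n)) →L[ℝ] EuclideanSpace ℝ (Fin (2 * n))))
    (hJsmooth : ContDiffOn ℝ (⊤ : ℕ∞) J D)
    (hJsq : ∀ z ∈ D, (J z).comp (J z) =
      - ContinuousLinearMap.id ℝ (EuclideanSpace ℝ (Fin (2 * n))))
    (u : EuclideanSpace ℝ (Fin (2 * n)) → ℝ)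
    (hu : ContDiffOn ℝ 2 u D) :
    (∀ Ω : Set ℂ, IsOpen Ω →
      ∀ f : ℂ → EuclideanSpace ℝ (Fin (2 * n)),
        ContDiffOn ℝ 2 f Ω → Set.MapsTo f Ω D → IsJHolo J Ω f →
        ∀ ζ ∈ Ω, 0 ≤ lap (u ∘ f) ζ) ↔
    (∀ z ∈ D, ∀ v, 0 ≤ acLevi J u z v) :=
  stmt_6_general hD (hJsmooth.of_le (WithTop.coe_le_coe.2 (le_top : (5 : ℕ∞) ≤ ⊤))) hJsq hu
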